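/- The functions μ_b and μ_f are C¹ on D₁, and for every (K,c) ∈ D₁ the partial derivatives with respect to c satisfy ∂μ_b/∂c (K,c) > 0 and ∂μ_f/∂c (K,c) < 0; in particular, for each fixed K ∈ (K₀,K_M), c ↦ μ_b(K,c) is strictly increasing and c ↦ μ_f(K,c) is strictly decreasing on (c₁(K), c_M(K)). -/

import Mathlib

open Set Filter MeasureTheory

noncomputable section

namespace TrafficTW

/-- `f(u) = (K u - V(u) - c)/K`. -/
def fTV (V : ℝ → ℝ) (K c u : ℝ) : ℝ := (K * u - V u - c) / K

/-- `f'(u) = (K - V'(u))/K`. -/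
def fdTV (V' : ℝ → ℝ) (K u : ℝ) : ℝ := (K - V' u) / K

/-- `h(u,μ) = f'(u) + μ`. -/
def hTV (V' : ℝ → ℝ) (K μ u : ℝ) : ℝ := fdTV V' K u + μ

/-- `g₁(u) = 1/(τ κ(1/u))`. -/
def g1TV (κ : ℝ → ℝ) (τ u : ℝ) : ℝ := 1 / (τ * κ (1 / u))

/-- `g₂(u) = u/(2 τ κ(1/u))`. -/
def g2TV (κ : ℝ → ℝ) (τ u : ℝ) : ℝ := u / (2 * τ * κ (1 / u))

/-- The traveling-wave system (TV): `u' = w`, `w' = g₁ f + g₂ h w`. -/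
def IsTVSol (V V' κ : ℝ → ℝ) (τ K c μ : ℝ) (u w : ℝ → ℝ) : Prop :=
  (∀ z, HasDerivAt u (w z) z) ∧
  (∀ z, HasDerivAt w
    (g1TV κ τ (u z) * fTV V K c (u z) + g2TV κ τ (u z) * hTV V' K μ (u z) * w z) z)

/-- Assumption (A1), where `V'` and `V''` are the first and second derivatives of `V`. -/
def A1 (V V' V'' : ℝ → ℝ) (UM : ℝ) : Prop :=
  (∀ u ∈ Ici (0:ℝ), HasDerivWithinAt V (V' u) (Ici 0) u) ∧
  ContinuousOn V' (Ici 0) ∧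
  (∀ u ∈ Ioi (0:ℝ), HasDerivAt V' (V'' u) u) ∧
  ContinuousOn V'' (Ioi 0) ∧
  (∀ u, 0 < u → 0 < V' u) ∧ (∃ M, ∀ u, 0 < u → V' u ≤ M) ∧
  Tendsto V' atTop (nhds 0) ∧
  0 < UM ∧ (∀ u, 0 < u → V' u ≤ V' UM) ∧
  (∀ u, 0 < u → (V'' u = 0 ↔ u = UM))

/-- Assumption (A2). -/
def A2 (κ : ℝ → ℝ) : Prop :=
  ContDiffOn ℝ 1 κ (Ioi 0) ∧ ∀ ρ, 0 < ρ → 0 < κ ρ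

/-- `c₀ = -V(0)`. -/
def c0v (V : ℝ → ℝ) : ℝ := - V 0

/-- `c_M(K) = K u_M(K) - V(u_M(K))`, where `uMx` is the function `K ↦ u_M(K)`. -/
def cMf (V : ℝ → ℝ) (uMx : ℝ → ℝ) (K : ℝ) : ℝ := K * uMx K - V (uMx K)

/-- `c_m(K) = K u_m(K) - V(u_m(K))`, where `umx` is the function `K ↦ u_m(K)`. -/
def cmf (V : ℝ → ℝ) (umx : ℝ → ℝ) (K : ℝ) : ℝ := K * umx K - V (umx K)

/-- `c₁(K) = max (c₀, c_m(K))`. -/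
def c1f (V : ℝ → ℝ) (umx : ℝ → ℝ) (K : ℝ) : ℝ := max (c0v V) (cmf V umx K)

/-- `uMx K = u_M(K)` is the unique local maximum point of `u ↦ K u - V(u)`, characterized
by `u_M(K) ∈ (0, U_M)` and `V'(u_M(K)) = K`, for `K ∈ (K₀, K_M)`. -/
def UMaxHyp (V' : ℝ → ℝ) (UM : ℝ) (uMx : ℝ → ℝ) : Prop :=
  ∀ K, V' 0 < K → K < V' UM → uMx K ∈ Ioo 0 UM ∧ V' (uMx K) = K

/-- `umx K = u_m(K)` is the unique local minimum point of `u ↦ K u - V(u)`, characterized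
by `u_m(K) ∈ (U_M, ∞)` and `V'(u_m(K)) = K`, for `K ∈ (0, K_M)`. -/
def UMinHyp (V' : ℝ → ℝ) (UM : ℝ) (umx : ℝ → ℝ) : Prop :=
  ∀ K, 0 < K → K < V' UM → UM < umx K ∧ V' (umx K) = K

/-- Characterization of `K₁ ∈ (K₀, K_M)`: `c_m(K) < c₀` for `K < K₁` and `c_m(K) > c₀`
for `K > K₁`. -/
def K1Hyp (V V' : ℝ → ℝ) (UM : ℝ) (umx : ℝ → ℝ) (K₁ : ℝ) : Prop :=
  V' 0 < K₁ ∧ K₁ < V' UM ∧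
  (∀ K, 0 < K → K < K₁ → cmf V umx K < c0v V) ∧
  cmf V umx K₁ = c0v V ∧
  (∀ K, K₁ < K → K < V' UM → c0v V < cmf V umx K)

/-- The parameter region `D₁`. -/
def D1 (V V' : ℝ → ℝ) (UM : ℝ) (uMx umx : ℝ → ℝ) : Set (ℝ × ℝ) :=
  {p | V' 0 < p.1 ∧ p.1 < V' UM ∧ c1f V umx p.1 < p.2 ∧ p.2 < cMf V uMx p.1}

/-- The parameter region `D₂`. -/
def D2 (V V' : ℝ → ℝ) (umx : ℝ → ℝ) (K₁ : ℝ) : Set (ℝ × ℝ) :=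
  {p | (V' 0 < p.1 ∧ p.1 < K₁ ∧ p.2 = c0v V) ∨
       (0 < p.1 ∧ p.1 < K₁ ∧ cmf V umx p.1 < p.2 ∧ p.2 < c0v V)}

/-- For `(K,c) ∈ D₁`: `u₁ < u₀ < u₂` are the exactly three positive zeros of `f`. -/
def ZerosD1 (V : ℝ → ℝ) (K c u1 u0 u2 : ℝ) : Prop :=
  0 < u1 ∧ u1 < u0 ∧ u0 < u2 ∧
  fTV V K c u1 = 0 ∧ fTV V K c u0 = 0 ∧ fTV V K c u2 = 0 ∧
  ∀ u, 0 < u → fTV V K c u = 0 → u = u1 ∨ u = u0 ∨ u = u2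

/-- For `(K,c) ∈ D₂`: `u₀ < u₂` are the exactly two positive zeros of `f`. -/
def ZerosD2 (V : ℝ → ℝ) (K c u0 u2 : ℝ) : Prop :=
  0 < u0 ∧ u0 < u2 ∧ fTV V K c u0 = 0 ∧ fTV V K c u2 = 0 ∧
  ∀ u, 0 < u → fTV V K c u = 0 → u = u0 ∨ u = u2

/-- Condition (HE1). -/
def HE1 (u1 u2 : ℝ) (u w : ℝ → ℝ) : Prop :=
  Tendsto u atBot (nhds u1) ∧ Tendsto u atTop (nhds u2) ∧
  Tendsto w atBot (nhds 0) ∧ Tendsto w atTop (nhds 0) ∧ ∀ z, 0 < w z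

/-- Condition (HE2). -/
def HE2 (u1 u2 : ℝ) (u w : ℝ → ℝ) : Prop :=
  Tendsto u atBot (nhds u2) ∧ Tendsto u atTop (nhds u1) ∧
  Tendsto w atBot (nhds 0) ∧ Tendsto w atTop (nhds 0) ∧ ∀ z, w z < 0

/-- Condition (HO) with level `ub`. -/
def HO (ub : ℝ) (u w : ℝ → ℝ) : Prop :=
  Tendsto u atBot (nhds ub) ∧ Tendsto u atTop (nhds ub) ∧
  Tendsto w atBot (nhds 0) ∧ Tendsto w atTop (nhds 0) ∧
  ¬ (∀ z, u z = ub ∧ w z = 0)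

/-- (TV) with parameter `μ` has a positive solution satisfying (HE1). -/
def HasHE1 (V V' κ : ℝ → ℝ) (τ K c μ u1 u2 : ℝ) : Prop :=
  ∃ u w : ℝ → ℝ, IsTVSol V V' κ τ K c μ u w ∧ (∀ z, 0 < u z) ∧ HE1 u1 u2 u w

/-- (TV) with parameter `μ` has a positive solution satisfying (HE2). -/
def HasHE2 (V V' κ : ℝ → ℝ) (τ K c μ u1 u2 : ℝ) : Prop :=
  ∃ u w : ℝ → ℝ, IsTVSol V V' κ τ K c μ u w ∧ (∀ z, 0 < u z) ∧ HE2 u1 u2 u w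

/-- (TV) with parameter `μ` has a positive solution satisfying (HO) with level `ub`. -/
def HasHO (V V' κ : ℝ → ℝ) (τ K c μ ub : ℝ) : Prop :=
  ∃ u w : ℝ → ℝ, IsTVSol V V' κ τ K c μ u w ∧ (∀ z, 0 < u z) ∧ HO ub u w

/-- Condition (H): `∫₁^∞ dρ/(ρ³ κ(ρ)) = ∞`. -/
def CondH (κ : ℝ → ℝ) : Prop :=
  ¬ IntegrableOn (fun ρ => 1 / (ρ ^ 3 * κ ρ)) (Ioi 1)

/-- Condition (C). -/
def CondC (V' κ : ℝ → ℝ) (UM K₁ K : ℝ) : Prop :=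
  (K₁ < K ∧ K < V' UM) ∨ (CondH κ ∧ V' 0 < K ∧ K ≤ K₁)

/-- Periodic solution. -/
def IsPeriodicSol (u w : ℝ → ℝ) : Prop :=
  ∃ Z, 0 < Z ∧ ∀ z, u (z + Z) = u z ∧ w (z + Z) = w z

/-- Nonconstant pair of functions. -/
def Nonconst (u w : ℝ → ℝ) : Prop := ∃ z, u z ≠ u 0 ∨ w z ≠ w 0

/-- Discriminant of the Jacobian at an equilibrium `(u,0)`. -/
def discTV (V' κ : ℝ → ℝ) (τ K u μ : ℝ) : ℝ :=
  (g2TV κ τ u) ^ 2 * (hTV V' K μ u) ^ 2 + 4 * g1TV κ τ u * fdTV V' K u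

/-- The eigenvalue `λ₊(u)`. -/
def lamP (V' κ : ℝ → ℝ) (τ K u μ : ℝ) : ℝ :=
  (g2TV κ τ u * hTV V' K μ u + Real.sqrt (discTV V' κ τ K u μ)) / 2

/-- The eigenvalue `λ₋(u)`. -/
def lamM (V' κ : ℝ → ℝ) (τ K u μ : ℝ) : ℝ :=
  (g2TV κ τ u * hTV V' K μ u - Real.sqrt (discTV V' κ τ K u μ)) / 2

/-- `Z` is the minimal period of `(u,w)`. -/
def IsMinPeriod (u w : ℝ → ℝ) (Z : ℝ) : Prop :=
  0 < Z ∧ (∀ z, u (z + Z) = u z ∧ w (z + Z) = w z) ∧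
  ∀ Z', 0 < Z' → (∀ z, u (z + Z') = u z ∧ w (z + Z') = w z) → Z ≤ Z'

/-!
Heteroclinic orbits in the half-plane `w ≠ 0` are graphs over `[u₁, u₂]`; rescaling to `[0, 1]` and
reflecting the (HE2) orbits turns both families into positive solutions `ω` of
`ω' = F / ω + A + m B` with `ω 0 = ω 1 = 0`, where `m = μ` or `m = -μ`. The difference of two such
profiles solves a linear equation whose inhomogeneity is their defect. Its integrating factor is
bounded because `F` changes sign from `+` to `-`, so the defect integrates to zero against it: this
is Melnikov's identity. Transversality of the equilibria gives the weighted bound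
`ω s ≥ k s (1 - s)`, which controls the defect; expanding the identity to first order in a pair of
nearby parameters then shows that `m` is strictly differentiable, hence `C¹`.

If `c < c'`, both end points of the interval move to the right, so the profile for `c'` crosses the
profile for `c` from below. Comparing slopes at the crossing bounds `m (K, c') - m (K, c)`
from below by a positive multiple of `c' - c`.
-/

open Topology

section Calculus

theorem nonneg_of_forall_neg_imp_deriv_nonneg {g g' : ℝ → ℝ} {a b : ℝ}
    (hg : ContinuousOn g (Icc a b)) (ha : 0 ≤ g a) (hd : ∀ s ∈ Ioo a b, HasDerivAt g (g' s) s)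
    (h : ∀ s ∈ Ioo a b, g s < 0 → 0 ≤ g' s) : ∀ s ∈ Icc a b, 0 ≤ g s := by
  intro s hs
  by_contra! hneg
  have hgs : ContinuousOn g (Icc a s) := hg.mono (Icc_subset_Icc_right hs.2)
  have hcompact : IsCompact (Icc a s ∩ g ⁻¹' Ici 0) :=
    isCompact_Icc.of_isClosed_subset (hgs.preimage_isClosed_of_isClosed isClosed_Icc isClosed_Ici)
      inter_subset_left
  obtain ⟨t, ⟨ht, ht0⟩, hmax⟩ := hcompact.exists_isGreatest ⟨a, left_mem_Icc.2 hs.1, ha⟩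
  have ht0 : 0 ≤ g t := ht0
  have hts : t < s := ht.2.lt_of_ne (by rintro rfl; linarith)
  have hneg' : ∀ x ∈ Ioo t s, g x < 0 := fun x hx => by
    by_contra! hx0
    exact (hmax ⟨⟨ht.1.trans hx.1.le, hx.2.le⟩, hx0⟩).not_gt hx.1
  have hsub : ∀ x ∈ Ioo t s, x ∈ Ioo a b := fun x hx =>
    ⟨ht.1.trans_lt hx.1, hx.2.trans_le hs.2⟩
  obtain ⟨x, hx, hslope⟩ := exists_hasDerivAt_eq_slope g g' hts
    (hgs.mono (Icc_subset_Icc_left ht.1)) fun x hx => hd x (hsub x hx)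
  have hx0 := h x (hsub x hx) (hneg' x hx)
  rw [hslope, le_div_iff₀ (sub_pos.2 hts)] at hx0
  linarith

theorem exists_eq_zero_deriv_nonneg {g g' : ℝ → ℝ} {a b : ℝ} (hab : a ≤ b)
    (hg : ContinuousOn g (Icc a b)) (ha : g a < 0) (hb : 0 < g b)
    (hd : ∀ s ∈ Ioo a b, HasDerivAt g (g' s) s) : ∃ s ∈ Ioo a b, g s = 0 ∧ 0 ≤ g' s := by
  have hcompact : IsCompact (Icc a b ∩ g ⁻¹' Ici 0) :=
    isCompact_Icc.of_isClosed_subset (hg.preimage_isClosed_of_isClosed isClosed_Icc isClosed_Ici)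
      inter_subset_left
  obtain ⟨s, ⟨hs, hs0⟩, hmin⟩ := hcompact.exists_isLeast ⟨b, right_mem_Icc.2 hab, hb.le⟩
  have hneg : ∀ y ∈ Ico a s, g y < 0 := fun y hy => by
    by_contra! hy0
    exact (hmin ⟨⟨hy.1, hy.2.le.trans hs.2⟩, hy0⟩).not_gt hy.2
  obtain ⟨y, hy, hy0⟩ := intermediate_value_Icc hs.1 (hg.mono (Icc_subset_Icc_right hs.2))
    (show (0 : ℝ) ∈ Icc (g a) (g s) from ⟨ha.le, hs0⟩)
  obtain rfl : y = s := le_antisymm hy.2 (hmin ⟨⟨hy.1, hy.2.trans hs.2⟩, hy0.ge⟩)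
  have hay : a < y := hs.1.lt_of_ne (by rintro rfl; linarith)
  have hyb : y < b := hs.2.lt_of_ne (by rintro rfl; linarith)
  refine ⟨y, ⟨hay, hyb⟩, hy0,
    ge_of_tendsto ((hd y ⟨hay, hyb⟩).tendsto_slope.mono_left (nhdsLT_le_nhdsNE y)) ?_⟩
  filter_upwards [Ioo_mem_nhdsLT hay] with x hx
  rw [slope_def_field, hy0]
  exact div_nonneg_of_nonpos (by linarith [hneg x ⟨hx.1.le, hx.2⟩]) (by linarith [hx.2])

theorem integrableOn_Ioo_of_continuousOn_of_bounded {E : Type*} [NormedAddCommGroup E]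
    {f : ℝ → E} {a b M : ℝ} (hf : ContinuousOn f (Ioo a b)) (hM : ∀ s ∈ Ioo a b, ‖f s‖ ≤ M) :
    IntegrableOn f (Ioo a b) :=
  IntegrableOn.of_bound measure_Ioo_lt_top (hf.aestronglyMeasurable measurableSet_Ioo) M
    ((ae_restrict_iff' measurableSet_Ioo).2 (.of_forall hM))

theorem isLittleO_integral_of_dominated {ι α E E' : Type*} [MeasurableSpace α] {ν : Measure α}
    [NormedAddCommGroup E] [NormedSpace ℝ E] [NormedAddCommGroup E'] {l : Filter ι}
    [l.IsCountablyGenerated] {g : ι → α → E} {r : ι → E'} {M : α → ℝ} (hM : Integrable M ν)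
    (hmeas : ∀ᶠ i in l, AEStronglyMeasurable (g i) ν)
    (hle : ∀ᶠ i in l, ∀ᵐ s ∂ν, ‖g i s‖ ≤ M s * ‖r i‖)
    (hlim : ∀ᵐ s ∂ν, (fun i => g i s) =o[l] r) :
    (fun i => ∫ s, g i s ∂ν) =o[l] r := by
  have key : Tendsto (fun i => ∫ s, ‖r i‖⁻¹ • g i s ∂ν) l (𝓝 (∫ _, (0 : E) ∂ν)) := by
    refine tendsto_integral_filter_of_dominated_convergence (fun s => |M s|) ?_ ?_ hM.abs ?_
    · filter_upwards [hmeas] with i hi using hi.const_smul _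
    · filter_upwards [hle] with i hi
      filter_upwards [hi] with s hs
      rw [norm_smul, norm_inv, norm_norm]
      refine inv_mul_le_of_le_mul₀ (norm_nonneg _) (abs_nonneg _) (hs.trans ?_)
      rw [mul_comm]
      exact mul_le_mul_of_nonneg_left (le_abs_self _) (norm_nonneg _)
    · filter_upwards [hlim] with s hs using hs.norm_right.tendsto_inv_smul_nhds_zero
  rw [integral_zero] at key
  have hscale : ∀ᶠ i in l, ‖r i‖ • ∫ s, ‖r i‖⁻¹ • g i s ∂ν = ∫ s, g i s ∂ν := by
    filter_upwards [hle] with i hi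
    rw [← integral_smul]
    refine integral_congr_ae ?_
    filter_upwards [hi] with s hs
    rcases eq_or_ne ‖r i‖ 0 with h0 | h0
    · rw [h0, mul_zero, norm_le_zero_iff] at hs
      rw [hs, smul_zero, smul_zero]
    · exact smul_inv_smul₀ h0 _
  have hmul := (Asymptotics.isBigO_refl (fun i => ‖r i‖) l).smul_isLittleO
    ((Asymptotics.isLittleO_one_iff ℝ).2 key)
  simp only [smul_eq_mul, mul_one] at hmul
  exact (hmul.congr' hscale .rfl).of_norm_right

end Calculus

section UniformOnCompact

theorem continuousOn_right_of_continuousAt {P : Type*} [TopologicalSpace P] {H : P → ℝ → ℝ} {p : P}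
    {S : Set ℝ} (hH : ∀ s ∈ S, ContinuousAt (fun x : P × ℝ => H x.1 x.2) (p, s)) :
    ContinuousOn (H p) S := fun s hs =>
  ((hH s hs).comp (f := fun s => (p, s))
    (Continuous.prodMk_right p).continuousAt).continuousWithinAt

theorem exists_eventually_forall_abs_le {P : Type*} [TopologicalSpace P] {H : P → ℝ → ℝ} {p₀ : P}
    {S : Set ℝ} (hS : IsCompact S)
    (hH : ∀ s ∈ S, ContinuousAt (fun x : P × ℝ => H x.1 x.2) (p₀, s)) :
    ∃ C, ∀ᶠ p in 𝓝 p₀, ∀ s ∈ S, |H p s| ≤ C := by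
  obtain ⟨C, hC⟩ := hS.exists_bound_of_continuousOn (continuousOn_right_of_continuousAt hH)
  refine ⟨C + 1, hS.eventually_forall_of_forall_eventually fun s hs => ?_⟩
  exact (hH s hs).abs.eventually (Iic_mem_nhds ((hC s hs).trans_lt (lt_add_one C)))

variable {P : Type*} [NormedAddCommGroup P] [NormedSpace ℝ P] {H : P → ℝ → ℝ} {p₀ : P} {S : Set ℝ}

theorem exists_eventually_forall_abs_sub_le (hS : IsCompact S)
    (hH : ∀ s ∈ S, ContDiffAt ℝ 1 (fun x : P × ℝ => H x.1 x.2) (p₀, s)) :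
    ∃ C, ∀ᶠ x : P × P in 𝓝 (p₀, p₀), ∀ s ∈ S, |H x.1 s - H x.2 s| ≤ C * ‖x.1 - x.2‖ := by
  have hcont : ContinuousOn (fun s => fderiv ℝ (fun x : P × ℝ => H x.1 x.2) (p₀, s)) S :=
    fun s hs => (ContinuousAt.comp (f := fun s => (p₀, s))
      ((hH s hs).fderiv_right (m := 0) le_rfl).continuousAt
      (Continuous.prodMk_right p₀).continuousAt).continuousWithinAt
  obtain ⟨C, hC⟩ := hS.exists_bound_of_continuousOn hcont
  refine ⟨(C + 1).toNNReal, hS.eventually_forall_of_forall_eventually fun s hs => ?_⟩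
  obtain ⟨t, ht, hlip⟩ := (hH s hs).exists_lipschitzOnWith_of_nnnorm_lt (C + 1).toNNReal
    (Real.lt_toNNReal_iff_coe_lt.2 ((hC s hs).trans_lt (lt_add_one C)))
  have h₁ : Tendsto (fun z : (P × P) × ℝ => (z.1.1, z.2)) (𝓝 ((p₀, p₀), s)) (𝓝 (p₀, s)) :=
    Continuous.tendsto (by fun_prop) ((p₀, p₀), s)
  have h₂ : Tendsto (fun z : (P × P) × ℝ => (z.1.2, z.2)) (𝓝 ((p₀, p₀), s)) (𝓝 (p₀, s)) :=
    Continuous.tendsto (by fun_prop) ((p₀, p₀), s)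
  filter_upwards [h₁ ht, h₂ ht] with z hz₁ hz₂
  have hz := hlip.norm_sub_le hz₁ hz₂
  rwa [Prod.mk_sub_mk, sub_self, Prod.norm_mk, norm_zero, max_eq_left (norm_nonneg _)] at hz

theorem continuousOn_fderiv_left
    (hH : ∀ s ∈ S, ContDiffAt ℝ 1 (fun x : P × ℝ => H x.1 x.2) (p₀, s)) :
    ContinuousOn (fun s => fderiv ℝ (fun p => H p s) p₀) S := by
  have hcont : ContinuousOn (fun s => (fderiv ℝ (fun x : P × ℝ => H x.1 x.2) (p₀, s)).comp
      (ContinuousLinearMap.inl ℝ P ℝ)) S := fun s hs =>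
    ((ContinuousAt.comp (f := fun s => (p₀, s))
      ((hH s hs).fderiv_right (m := 0) le_rfl).continuousAt
      (Continuous.prodMk_right p₀).continuousAt).clm_comp continuousAt_const).continuousWithinAt
  refine hcont.congr fun s hs => ?_
  exact (((hH s hs).differentiableAt one_ne_zero).hasFDerivAt.comp (f := fun p => (p, s)) p₀
    (hasFDerivAt_prodMk_left p₀ s)).fderiv

theorem isLittleO_mul_sub_of_hasStrictFDerivAt {f c : P → ℝ} {f' : P →L[ℝ] ℝ}
    (hf : HasStrictFDerivAt f f' p₀) (hc : ContinuousAt c p₀) :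
    (fun x : P × P => c x.2 * (f x.1 - f x.2) - c p₀ * f' (x.1 - x.2)) =o[𝓝 (p₀, p₀)]
      fun x => x.1 - x.2 := by
  have hc' : (fun x : P × P => c x.2 - c p₀) =o[𝓝 (p₀, p₀)] fun _ => (1 : ℝ) :=
    (Asymptotics.isLittleO_one_iff ℝ).2 <|
      tendsto_sub_nhds_zero_iff.2 (hc.tendsto.comp continuousAt_snd)
  have hprod := hc'.smul_isBigO hf.isBigO_sub
  simp only [one_smul] at hprod
  refine (hprod.add (hf.isLittleO.const_mul_left (c p₀))).congr_left fun x => ?_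
  rw [smul_eq_mul]
  ring

theorem contDiffOn_one_of_hasStrictFDerivAt {E : Type*} [NormedAddCommGroup E] [NormedSpace ℝ E]
    {f : P → E} {f' : P → P →L[ℝ] E} {U : Set P} (hU : IsOpen U)
    (hf : ∀ p ∈ U, HasStrictFDerivAt f (f' p) p) : ContDiffOn ℝ 1 f U := by
  suffices hcont : ContinuousOn f' U by
    rw [show (1 : WithTop ℕ∞) = 0 + 1 by simp, contDiffOn_succ_iff_fderiv_of_isOpen hU]
    exact ⟨fun p hp => (hf p hp).differentiableAt.differentiableWithinAt, by simp,
      contDiffOn_zero.2 (hcont.congr fun p hp => (hf p hp).hasFDerivAt.fderiv)⟩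
  refine fun p hp => ContinuousAt.continuousWithinAt (Metric.tendsto_nhds.2 fun ε hε => ?_)
  have hlo := (hasStrictFDerivAt_iff_isLittleO.1 (hf p hp)).def (half_pos hε)
  rw [nhds_prod_eq] at hlo
  obtain ⟨t, ht, hlip⟩ := (eventually_prod_self_iff
    (r := fun x y => ‖f x - f y - f' p (x - y)‖ ≤ ε / 2 * ‖x - y‖)).1 hlo
  filter_upwards [eventually_eventually_nhds.2 ht, hU.mem_nhds hp] with q hq hqU
  have hle := ((hf q hqU).hasFDerivAt.sub (f' p).hasFDerivAt).le_of_lipschitzOn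
    (C := ⟨ε / 2, (half_pos hε).le⟩) hq <| LipschitzOnWith.of_dist_le_mul fun x hx y hy => by
      rw [dist_eq_norm, dist_eq_norm]
      refine le_trans (le_of_eq ?_) (hlip x hx y hy)
      rw [Pi.sub_apply, Pi.sub_apply, map_sub]
      abel_nf
  rw [dist_eq_norm]
  exact hle.trans_lt (half_lt_self hε)

end UniformOnCompact

section Profile

/-- The graph `w = ω(u)` over `[a, b]` of an orbit of `u' = w`, `w' = F(u) + G(u) w` in the upper
half-plane that connects the equilibria `(a, 0)` and `(b, 0)`. -/
structure Profile (F G ω : ℝ → ℝ) (a b : ℝ) : Prop where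
  continuousOn : ContinuousOn ω (Icc a b)
  left : ω a = 0
  right : ω b = 0
  pos : ∀ s ∈ Ioo a b, 0 < ω s
  hasDerivAt : ∀ s ∈ Ioo a b, HasDerivAt ω (F s / ω s + G s) s

/-- `F` is positive on `(a, s₀)` and negative on `(s₀, b)`. -/
structure SignChange (F : ℝ → ℝ) (a b s₀ : ℝ) : Prop where
  mem : s₀ ∈ Ioo a b
  pos : ∀ s ∈ Ioo a s₀, 0 < F s
  neg : ∀ s ∈ Ioo s₀ b, F s < 0

variable {F G ω : ℝ → ℝ} {a b : ℝ}

theorem reflect_mem_Icc {s : ℝ} (hs : s ∈ Icc a b) : a + b - s ∈ Icc a b :=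
  ⟨by linarith [hs.2], by linarith [hs.1]⟩

theorem reflect_mem_Ioo {s : ℝ} (hs : s ∈ Ioo a b) : a + b - s ∈ Ioo a b :=
  ⟨by linarith [hs.2], by linarith [hs.1]⟩

theorem Profile.reflect (h : Profile F G ω a b) :
    Profile (fun s => -F (a + b - s)) (fun s => -G (a + b - s)) (fun s => ω (a + b - s)) a b where
  continuousOn := h.continuousOn.comp (by fun_prop) fun _ => reflect_mem_Icc
  left := by simpa using h.right
  right := by simpa using h.left
  pos s hs := h.pos _ (reflect_mem_Ioo hs)
  hasDerivAt s hs :=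
    ((h.hasDerivAt _ (reflect_mem_Ioo hs)).comp_const_sub (a + b) s).congr_deriv (by ring)

theorem Profile.comp_affine {F G W : ℝ → ℝ} {u v : ℝ} (huv : u < v) (h : Profile F G W u v) :
    Profile (fun s => (v - u) * F (u + (v - u) * s)) (fun s => (v - u) * G (u + (v - u) * s))
      (fun s => W (u + (v - u) * s)) 0 1 where
  continuousOn := h.continuousOn.comp (by fun_prop) fun s hs =>
    ⟨by nlinarith [hs.1], by nlinarith [hs.2]⟩
  left := by simpa using h.left
  right := by simpa using h.right
  pos s hs := h.pos _ ⟨by nlinarith [hs.1], by nlinarith [hs.2]⟩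
  hasDerivAt s hs := by
    have hU : HasDerivAt (fun s => u + (v - u) * s) (v - u) s := by
      simpa using ((hasDerivAt_id s).const_mul (v - u)).const_add u
    exact ((h.hasDerivAt _ ⟨by nlinarith [hs.1], by nlinarith [hs.2]⟩).comp s hU).congr_deriv
      (by ring)

theorem Profile.mul_sub_le (h : Profile F G ω a b) {d c M ε : ℝ} (hdb : d ≤ b) (hM : 0 ≤ M)
    (hε : 0 < ε) (hεc : ε * (ε + M) ≤ c) (hF : ∀ s ∈ Ioo a d, c * (s - a) ≤ F s)
    (hG : ∀ s ∈ Ioo a d, -M ≤ G s) : ∀ s ∈ Icc a d, ε * (s - a) ≤ ω s := by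
  have hsub : ∀ s ∈ Ioo a d, s ∈ Ioo a b := fun s hs => ⟨hs.1, hs.2.trans_le hdb⟩
  have hbarrier := nonneg_of_forall_neg_imp_deriv_nonneg
    (g := fun s => ω s - ε * (s - a)) (g' := fun s => F s / ω s + G s - ε)
    ((h.continuousOn.mono (Icc_subset_Icc_right hdb)).sub (by fun_prop)) (by simp [h.left])
    (fun s hs => by
      simpa using (h.hasDerivAt s (hsub s hs)).fun_sub
        (((hasDerivAt_id s).sub_const a).const_mul ε))
    fun s hs hneg => by
      have hω := h.pos s (hsub s hs)
      have hquot : c / ε ≤ F s / ω s := by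
        rw [div_le_div_iff₀ hε hω]
        have hc : 0 ≤ c := le_trans (by positivity) hεc
        nlinarith [hF s hs]
      have hcε : ε + M ≤ c / ε := by rwa [le_div_iff₀ hε, mul_comm]
      linarith [hG s hs]
  exact fun s hs => sub_nonneg.1 (hbarrier s hs)

theorem Profile.exists_eventually_mul_sub_le (h : Profile F G ω a b) (hab : a < b)
    (hG : ContinuousOn G (Icc a b)) {F' : ℝ} (hFa : F a = 0) (hF : HasDerivAt F F' a)
    (hF' : 0 < F') : ∃ ε > 0, ∀ᶠ s in 𝓝[>] a, ε * (s - a) ≤ ω s := by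
  obtain ⟨M, hM⟩ := isCompact_Icc.exists_bound_of_continuousOn hG
  have hM0 : 0 ≤ M := (norm_nonneg _).trans (hM a (left_mem_Icc.2 hab.le))
  have hslope : ∀ᶠ s in 𝓝[>] a, F' / 2 * (s - a) ≤ F s := by
    filter_upwards [(hF.tendsto_slope.mono_left (nhdsGT_le_nhdsNE a)).eventually
      (Ioi_mem_nhds (half_lt_self hF')), self_mem_nhdsWithin] with s hs has
    rw [slope_def_field, hFa, sub_zero, lt_div_iff₀ (sub_pos.2 has)] at hs
    exact hs.le
  obtain ⟨d, ⟨had, hdb⟩, hd⟩ := (mem_nhdsGT_iff_exists_mem_Ioc_Ioo_subset hab).1 hslope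
  have hε : 0 < min 1 (F' / 2 / (1 + M)) := by positivity
  refine ⟨_, hε, ?_⟩
  have hεc : min 1 (F' / 2 / (1 + M)) * (min 1 (F' / 2 / (1 + M)) + M) ≤ F' / 2 := calc
    _ ≤ F' / 2 / (1 + M) * (1 + M) := by
      gcongr
      · exact min_le_right _ _
      · exact min_le_left _ _
    _ = F' / 2 := div_mul_cancel₀ _ (by positivity)
  filter_upwards [Ioo_mem_nhdsGT had] with s hs
  exact h.mul_sub_le hdb hM0 hε hεc hd
    (fun t ht => (abs_le.1 (hM t ⟨ht.1.le, ht.2.le.trans hdb⟩)).1) s ⟨hs.1.le, hs.2.le⟩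

theorem Profile.exists_mul_le (h : Profile F G ω 0 1) (hG : ContinuousOn G (Icc 0 1))
    {F₀' F₁' : ℝ} (hF0 : F 0 = 0) (hF1 : F 1 = 0) (hF₀ : HasDerivAt F F₀' 0)
    (hF₁ : HasDerivAt F F₁' 1) (hF₀' : 0 < F₀') (hF₁' : 0 < F₁') :
    ∃ k > 0, ∀ s ∈ Icc 0 1, k * (s * (1 - s)) ≤ ω s := by
  obtain ⟨ε₀, hε₀, hleft⟩ := h.exists_eventually_mul_sub_le one_pos hG hF0 hF₀ hF₀'
  have hF₁r : HasDerivAt (fun s => -F (0 + 1 - s)) F₁' 0 := by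
    have h₁ : HasDerivAt F F₁' (0 + 1 - 0) := by simpa using hF₁
    simpa using (h₁.comp_const_sub (0 + 1) 0).fun_neg
  obtain ⟨ε₁, hε₁, hright⟩ := h.reflect.exists_eventually_mul_sub_le one_pos
    (hG.comp (by fun_prop) fun _ => reflect_mem_Icc).fun_neg (by simpa using hF1) hF₁r hF₁'
  obtain ⟨d, ⟨hd0, _⟩, hd⟩ :=
    (mem_nhdsGT_iff_exists_mem_Ioc_Ioo_subset one_pos).1 (hleft.and hright)
  have hmid : ContinuousOn ω (Icc d (1 - d)) :=
    h.continuousOn.mono (Icc_subset_Icc hd0.le (by linarith))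
  obtain ⟨k, hk, hmin⟩ := isCompact_Icc.exists_forall_le' hmid fun s hs =>
    h.pos s ⟨hd0.trans_le hs.1, by linarith [hs.2]⟩
  refine ⟨min k (min ε₀ ε₁), by positivity, fun s hs => ?_⟩
  obtain ⟨hs0, hs1⟩ := hs
  have hweight : 0 ≤ s * (1 - s) := mul_nonneg hs0 (sub_nonneg.2 hs1)
  rcases hs0.eq_or_lt with rfl | hs0'
  · simp [h.left]
  rcases hs1.eq_or_lt with rfl | hs1'
  · simp [h.right]
  rcases lt_or_ge s d with hsd | hsd
  · have hε : min k (min ε₀ ε₁) ≤ ε₀ := (min_le_right _ _).trans (min_le_left _ _)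
    have hle : ε₀ * (s - 0) ≤ ω s := (hd ⟨hs0', hsd⟩).1
    nlinarith [mul_le_mul_of_nonneg_right hε hweight, mul_nonneg hε₀.le (sq_nonneg s)]
  rcases lt_or_ge (1 - s) d with hsd' | hsd'
  · have hε : min k (min ε₀ ε₁) ≤ ε₁ := (min_le_right _ _).trans (min_le_right _ _)
    have hle : ε₁ * (1 - s - 0) ≤ ω (0 + 1 - (1 - s)) := (hd ⟨sub_pos.2 hs1', hsd'⟩).2
    rw [show 0 + 1 - (1 - s) = s by ring] at hle
    nlinarith [mul_le_mul_of_nonneg_right hε hweight, mul_nonneg hε₁.le (sq_nonneg (1 - s))]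
  · have hk' : min k (min ε₀ ε₁) ≤ k := min_le_left _ _
    nlinarith [mul_le_mul_of_nonneg_right hk' hweight, hmin s ⟨hsd, by linarith⟩,
      mul_nonneg hk.le (sq_nonneg s), mul_nonneg hk.le (sub_nonneg.2 hs1)]

end Profile

section Comparison

/-- The inhomogeneity in the linear equation for the difference `ω₂ - ω₁` of two profiles. -/
def defect (F₁ G₁ ω₁ F₂ G₂ : ℝ → ℝ) (s : ℝ) : ℝ := (F₂ s - F₁ s) / ω₁ s + (G₂ s - G₁ s)

/-- The rate `F / (ω₁ ω₂)` at which the linear equation for the difference of two profiles damps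
that difference; `F` belongs to the second profile. -/
def dampingRate (ω₁ F ω₂ : ℝ → ℝ) (s : ℝ) : ℝ := F s / (ω₁ s * ω₂ s)

/-- The integrating factor, normalized at `c`, of the linear equation `δ' = r - J δ`. -/
def integratingFactor (J : ℝ → ℝ) (c s : ℝ) : ℝ := Real.exp (∫ t in c..s, J t)

theorem integratingFactor_pos (J : ℝ → ℝ) (c s : ℝ) : 0 < integratingFactor J c s :=
  Real.exp_pos _

theorem hasDerivAt_integratingFactor {J : ℝ → ℝ} {a b c s : ℝ} (hJ : ContinuousOn J (Ioo a b))
    (hc : c ∈ Ioo a b) (hs : s ∈ Ioo a b) :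
    HasDerivAt (integratingFactor J c) (integratingFactor J c s * J s) s :=
  (intervalIntegral.integral_hasDerivAt_right
    (hJ.mono (ordConnected_Ioo.uIcc_subset hc hs)).intervalIntegrable
    (hJ.stronglyMeasurableAtFilter isOpen_Ioo s hs)
    (hJ.continuousAt (isOpen_Ioo.mem_nhds hs))).exp

theorem SignChange.integratingFactor_le {J : ℝ → ℝ} {a b c s₀ s : ℝ} (h : SignChange J a b s₀)
    (hJ : ContinuousOn J (Ioo a b)) (hc : c ∈ Ioo a b) (hs : s ∈ Ioo a b) :
    integratingFactor J c s ≤ integratingFactor J c s₀ := by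
  have hint : ∀ x ∈ Ioo a b, ∀ y ∈ Ioo a b, IntervalIntegrable J volume x y := fun x hx y hy =>
    (hJ.mono (ordConnected_Ioo.uIcc_subset hx hy)).intervalIntegrable
  refine Real.exp_le_exp.2 ?_
  rw [← sub_nonneg, intervalIntegral.integral_interval_sub_left (hint c hc s₀ h.mem)
    (hint c hc s hs)]
  rcases le_total s s₀ with hle | hle
  · rw [intervalIntegral.integral_of_le hle, integral_Ioc_eq_integral_Ioo]
    exact setIntegral_nonneg measurableSet_Ioo fun t ht => (h.pos t ⟨hs.1.trans ht.1, ht.2⟩).le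
  · rw [intervalIntegral.integral_symm, intervalIntegral.integral_of_le hle,
      integral_Ioc_eq_integral_Ioo]
    exact neg_nonneg.2 <| setIntegral_nonpos measurableSet_Ioo fun t ht =>
      (h.neg t ⟨ht.1, ht.2.trans hs.2⟩).le

variable {F₁ G₁ ω₁ F₂ G₂ ω₂ : ℝ → ℝ} {a b : ℝ}

theorem SignChange.dampingRate (h₁ : Profile F₁ G₁ ω₁ a b) (h₂ : Profile F₂ G₂ ω₂ a b) {s₀ : ℝ}
    (h : SignChange F₂ a b s₀) : SignChange (dampingRate ω₁ F₂ ω₂) a b s₀ where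
  mem := h.mem
  pos s hs := div_pos (h.pos s hs) <| have hs' : s ∈ Ioo a b := ⟨hs.1, hs.2.trans h.mem.2⟩
    mul_pos (h₁.pos s hs') (h₂.pos s hs')
  neg s hs := div_neg_of_neg_of_pos (h.neg s hs) <|
    have hs' : s ∈ Ioo a b := ⟨h.mem.1.trans hs.1, hs.2⟩
    mul_pos (h₁.pos s hs') (h₂.pos s hs')

theorem continuousOn_dampingRate (h₁ : Profile F₁ G₁ ω₁ a b) (h₂ : Profile F₂ G₂ ω₂ a b)
    (hF₂ : ContinuousOn F₂ (Ioo a b)) : ContinuousOn (dampingRate ω₁ F₂ ω₂) (Ioo a b) :=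
  hF₂.div ((h₁.continuousOn.mono Ioo_subset_Icc_self).mul
    (h₂.continuousOn.mono Ioo_subset_Icc_self))
    fun s hs => (mul_pos (h₁.pos s hs) (h₂.pos s hs)).ne'

theorem Profile.hasDerivAt_sub (h₁ : Profile F₁ G₁ ω₁ a b) (h₂ : Profile F₂ G₂ ω₂ a b) {s : ℝ}
    (hs : s ∈ Ioo a b) :
    HasDerivAt (fun s => ω₂ s - ω₁ s)
      (defect F₁ G₁ ω₁ F₂ G₂ s - dampingRate ω₁ F₂ ω₂ s * (ω₂ s - ω₁ s)) s := by
  have hω₁ := (h₁.pos s hs).ne'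
  have hω₂ := (h₂.pos s hs).ne'
  refine ((h₂.hasDerivAt s hs).fun_sub (h₁.hasDerivAt s hs)).congr_deriv ?_
  rw [defect, dampingRate]
  field_simp
  ring

theorem Profile.hasDerivAt_integratingFactor_mul_sub (h₁ : Profile F₁ G₁ ω₁ a b)
    (h₂ : Profile F₂ G₂ ω₂ a b) (hF₂ : ContinuousOn F₂ (Ioo a b)) {c s : ℝ} (hc : c ∈ Ioo a b)
    (hs : s ∈ Ioo a b) :
    HasDerivAt (fun s => integratingFactor (dampingRate ω₁ F₂ ω₂) c s * (ω₂ s - ω₁ s))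
      (integratingFactor (dampingRate ω₁ F₂ ω₂) c s * defect F₁ G₁ ω₁ F₂ G₂ s) s :=
  ((hasDerivAt_integratingFactor (continuousOn_dampingRate h₁ h₂ hF₂) hc hs).mul
    (h₁.hasDerivAt_sub h₂ hs)).congr_deriv (by ring)

theorem Profile.tendsto_integratingFactor_mul_sub (h₁ : Profile F₁ G₁ ω₁ a b)
    (h₂ : Profile F₂ G₂ ω₂ a b) (hF₂ : ContinuousOn F₂ (Ioo a b)) {c s₀ : ℝ}
    (hsign : SignChange F₂ a b s₀) (hc : c ∈ Ioo a b) {e : ℝ} (he : e ∈ Icc a b)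
    (he₁ : ω₁ e = 0) (he₂ : ω₂ e = 0) :
    Tendsto (fun s => integratingFactor (dampingRate ω₁ F₂ ω₂) c s * (ω₂ s - ω₁ s))
      (𝓝[Ioo a b] e) (𝓝 0) := by
  have hcont : ContinuousWithinAt (fun s => ω₂ s - ω₁ s) (Ioo a b) e :=
    ((h₂.continuousOn.sub h₁.continuousOn) e he).mono Ioo_subset_Icc_self
  have hδ : Tendsto (fun s => ω₂ s - ω₁ s) (𝓝[Ioo a b] e) (𝓝 0) := by
    simpa [he₁, he₂] using hcont.tendsto
  refine bdd_le_mul_tendsto_zero' (integratingFactor (dampingRate ω₁ F₂ ω₂) c s₀) ?_ hδ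
  filter_upwards [self_mem_nhdsWithin] with s hs
  rw [abs_of_pos (integratingFactor_pos _ _ _)]
  exact (hsign.dampingRate h₁ h₂).integratingFactor_le (continuousOn_dampingRate h₁ h₂ hF₂) hc hs

theorem Profile.exists_defect_eq_zero (h₁ : Profile F₁ G₁ ω₁ a b)
    (h₂ : Profile F₂ G₂ ω₂ a b) (hF₂ : ContinuousOn F₂ (Ioo a b)) {s₀ : ℝ}
    (hsign : SignChange F₂ a b s₀) : ∃ s ∈ Ioo a b, defect F₁ G₁ ω₁ F₂ G₂ s = 0 := by
  have hab : a < b := hsign.mem.1.trans hsign.mem.2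
  obtain ⟨s, hs, h0⟩ := exists_hasDerivAt_eq_zero' hab
    (nhdsWithin_Ioo_eq_nhdsGT hab ▸ h₁.tendsto_integratingFactor_mul_sub h₂ hF₂ hsign hsign.mem
      (left_mem_Icc.2 hab.le) h₁.left h₂.left)
    (nhdsWithin_Ioo_eq_nhdsLT hab ▸ h₁.tendsto_integratingFactor_mul_sub h₂ hF₂ hsign hsign.mem
      (right_mem_Icc.2 hab.le) h₁.right h₂.right)
    fun s hs => h₁.hasDerivAt_integratingFactor_mul_sub h₂ hF₂ hsign.mem hs
  exact ⟨s, hs, (mul_eq_zero.1 h0).resolve_left (integratingFactor_pos _ _ _).ne'⟩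

theorem Profile.integral_integratingFactor_mul_defect (h₁ : Profile F₁ G₁ ω₁ a b)
    (h₂ : Profile F₂ G₂ ω₂ a b) (hF₂ : ContinuousOn F₂ (Ioo a b)) {c s₀ : ℝ}
    (hsign : SignChange F₂ a b s₀) (hc : c ∈ Ioo a b)
    (hint : IntegrableOn (fun s => integratingFactor (dampingRate ω₁ F₂ ω₂) c s *
      defect F₁ G₁ ω₁ F₂ G₂ s) (Ioo a b)) :
    ∫ s in Ioo a b, integratingFactor (dampingRate ω₁ F₂ ω₂) c s * defect F₁ G₁ ω₁ F₂ G₂ s = 0 := by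
  have hab : a < b := hsign.mem.1.trans hsign.mem.2
  rw [← integral_Ioc_eq_integral_Ioo, ← intervalIntegral.integral_of_le hab.le,
    intervalIntegral.integral_eq_sub_of_hasDerivAt_of_tendsto hab
      (fun s hs => h₁.hasDerivAt_integratingFactor_mul_sub h₂ hF₂ hc hs)
      ((intervalIntegrable_iff_integrableOn_Ioo_of_le hab.le).2 hint)
      (nhdsWithin_Ioo_eq_nhdsGT hab ▸ h₁.tendsto_integratingFactor_mul_sub h₂ hF₂ hsign hc
        (left_mem_Icc.2 hab.le) h₁.left h₂.left)
      (nhdsWithin_Ioo_eq_nhdsLT hab ▸ h₁.tendsto_integratingFactor_mul_sub h₂ hF₂ hsign hc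
        (right_mem_Icc.2 hab.le) h₁.right h₂.right), sub_zero]

theorem Profile.abs_sub_le_left (h₁ : Profile F₁ G₁ ω₁ a b) (h₂ : Profile F₂ G₂ ω₂ a b)
    {d r : ℝ} (had : a < d) (hdb : d ≤ b) (hF₂ : ∀ s ∈ Ioo a d, 0 ≤ F₂ s)
    (hr : ∀ s ∈ Ioo a d, |defect F₁ G₁ ω₁ F₂ G₂ s| ≤ r) :
    ∀ s ∈ Icc a d, |ω₂ s - ω₁ s| ≤ r * (s - a) := by
  have hr0 : 0 ≤ r := (abs_nonneg _).trans (hr ((a + d) / 2) ⟨by linarith, by linarith⟩)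
  have hsub : ∀ s ∈ Ioo a d, s ∈ Ioo a b := fun s hs => ⟨hs.1, hs.2.trans_le hdb⟩
  have hJ : ∀ s ∈ Ioo a d, 0 ≤ dampingRate ω₁ F₂ ω₂ s := fun s hs =>
    div_nonneg (hF₂ s hs) (mul_pos (h₁.pos s (hsub s hs)) (h₂.pos s (hsub s hs))).le
  have hω₁ := h₁.continuousOn.mono (Icc_subset_Icc_right hdb)
  have hω₂ := h₂.continuousOn.mono (Icc_subset_Icc_right hdb)
  have hline : ∀ s, HasDerivAt (fun s => r * (s - a)) r s := fun s => by
    simpa using ((hasDerivAt_id s).sub_const a).const_mul r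
  have hupper := nonneg_of_forall_neg_imp_deriv_nonneg
    (g := fun s => r * (s - a) - (ω₂ s - ω₁ s)) (by fun_prop) (by simp [h₁.left, h₂.left])
    (fun s hs => (hline s).fun_sub (h₁.hasDerivAt_sub h₂ (hsub s hs))) fun s hs hneg => by
      have hδ : 0 ≤ ω₂ s - ω₁ s := by nlinarith [hs.1]
      nlinarith [mul_nonneg (hJ s hs) hδ, abs_le.1 (hr s hs)]
  have hlower := nonneg_of_forall_neg_imp_deriv_nonneg
    (g := fun s => r * (s - a) + (ω₂ s - ω₁ s)) (by fun_prop) (by simp [h₁.left, h₂.left])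
    (fun s hs => (hline s).fun_add (h₁.hasDerivAt_sub h₂ (hsub s hs))) fun s hs hneg => by
      have hδ : 0 ≤ -(ω₂ s - ω₁ s) := by nlinarith [hs.1]
      nlinarith [mul_nonneg (hJ s hs) hδ, abs_le.1 (hr s hs)]
  exact fun s hs => abs_le.2 ⟨by linarith [hlower s hs], sub_nonneg.1 (hupper s hs)⟩

theorem defect_reflect (s : ℝ) :
    defect (fun s => -F₁ (a + b - s)) (fun s => -G₁ (a + b - s)) (fun s => ω₁ (a + b - s))
      (fun s => -F₂ (a + b - s)) (fun s => -G₂ (a + b - s)) s =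
      -defect F₁ G₁ ω₁ F₂ G₂ (a + b - s) := by
  simp only [defect]
  ring

theorem Profile.abs_sub_le_right (h₁ : Profile F₁ G₁ ω₁ a b) (h₂ : Profile F₂ G₂ ω₂ a b)
    {d r : ℝ} (had : a ≤ d) (hdb : d < b) (hF₂ : ∀ s ∈ Ioo d b, F₂ s ≤ 0)
    (hr : ∀ s ∈ Ioo d b, |defect F₁ G₁ ω₁ F₂ G₂ s| ≤ r) :
    ∀ s ∈ Icc d b, |ω₂ s - ω₁ s| ≤ r * (b - s) := by
  intro s hs
  have hrefl : ∀ t ∈ Ioo a (a + b - d), a + b - t ∈ Ioo d b := fun t ht =>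
    ⟨by linarith [ht.2], by linarith [ht.1]⟩
  have hle := h₁.reflect.abs_sub_le_left h₂.reflect (d := a + b - d) (r := r) (by linarith)
    (by linarith) (fun t ht => neg_nonneg.2 (hF₂ _ (hrefl t ht)))
    (fun t ht => by rw [defect_reflect, abs_neg]; exact hr _ (hrefl t ht)) (a + b - s)
    ⟨by linarith [hs.2], by linarith [hs.1]⟩
  rwa [sub_sub_cancel, show a + b - s - a = b - s by ring] at hle

theorem Profile.abs_sub_le_mul (h₁ : Profile F₁ G₁ ω₁ 0 1) (h₂ : Profile F₂ G₂ ω₂ 0 1)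
    {η r s₀ : ℝ} (hη : 0 < η) (hsign : SignChange F₂ 0 1 s₀) (hs₀ : s₀ ∈ Icc η (1 - η))
    (hr : ∀ s ∈ Ioo 0 1, |defect F₁ G₁ ω₁ F₂ G₂ s| ≤ r) :
    ∀ s ∈ Icc 0 1, |ω₂ s - ω₁ s| ≤ r / η * (s * (1 - s)) := by
  obtain ⟨h0, h1⟩ := hsign.mem
  have hr0 : 0 ≤ r := (abs_nonneg _).trans (hr s₀ hsign.mem)
  intro s hs
  have hscale : ∀ t, η ≤ t → r ≤ r / η * t := fun t ht => by
    rw [div_mul_eq_mul_div, le_div_iff₀ hη]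
    exact mul_le_mul_of_nonneg_left ht hr0
  rcases le_total s s₀ with hle | hle
  · have hδ := h₁.abs_sub_le_left h₂ h0 h1.le (fun t ht => (hsign.pos t ht).le)
      (fun t ht => hr t ⟨ht.1, ht.2.trans h1⟩) s ⟨hs.1, hle⟩
    calc _ ≤ r * (s - 0) := hδ
      _ ≤ r / η * (1 - s) * (s - 0) :=
        mul_le_mul_of_nonneg_right (hscale _ (by linarith [hs₀.2])) (by linarith [hs.1])
      _ = _ := by ring
  · have hδ := h₁.abs_sub_le_right h₂ h0.le h1 (fun t ht => (hsign.neg t ht).le)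
      (fun t ht => hr t ⟨h0.trans ht.1, ht.2⟩) s ⟨hle, hs.2⟩
    calc _ ≤ r * (1 - s) := hδ
      _ ≤ r / η * s * (1 - s) :=
        mul_le_mul_of_nonneg_right (hscale _ (by linarith [hs₀.1])) (by linarith [hs.2])
      _ = _ := by ring

end Comparison

section Family

/-- A profile `ω` for `w' = F + (A + m B) w` on `[0, 1]`, where `m` is a scalar to be tuned. -/
structure ConnectionData where
  /-- the force term -/
  F : ℝ → ℝ
  /-- the part of the friction that does not involve `m` -/
  A : ℝ → ℝ
  /-- the coefficient of `m` in the friction -/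
  B : ℝ → ℝ
  /-- the profile -/
  ω : ℝ → ℝ
  /-- the parameter value at which the profile exists -/
  m : ℝ

namespace ConnectionData

/-- The friction coefficient `A + m B`. -/
def G (D : ConnectionData) (s : ℝ) : ℝ := D.A s + D.m * D.B s

/-- The defect of the pair of profiles, without the contribution of the difference of the
parameters `m`. -/
def paramDefect (D₁ D₂ : ConnectionData) (s : ℝ) : ℝ :=
  (D₂.F s - D₁.F s) / D₁.ω s + (D₂.A s - D₁.A s) + D₁.m * (D₂.B s - D₁.B s)

/-- The integrating factor, normalized at `1/2`, of the equation for `D₂.ω - D₁.ω`. -/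
def factor (D₁ D₂ : ConnectionData) : ℝ → ℝ :=
  integratingFactor (dampingRate D₁.ω D₂.F D₂.ω) (1 / 2)

theorem defect_eq (D₁ D₂ : ConnectionData) (s : ℝ) :
    defect D₁.F D₁.G D₁.ω D₂.F D₂.G s = paramDefect D₁ D₂ s + (D₂.m - D₁.m) * D₂.B s := by
  simp only [defect, paramDefect, G]
  ring

/-- The two connections differ by at most `r`, in the sense needed to control the linear equation
for `D₂.ω - D₁.ω`. -/
structure Close (D₁ D₂ : ConnectionData) (r : ℝ) : Prop where
  abs_paramDefect_le : ∀ s ∈ Ioo (0 : ℝ) 1, |paramDefect D₁ D₂ s| ≤ r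
  abs_m_sub_le : |D₂.m - D₁.m| ≤ r
  abs_defect_le : ∀ s ∈ Ioo (0 : ℝ) 1, |defect D₁.F D₁.G D₁.ω D₂.F D₂.G s| ≤ r
  abs_ω_sub_le : ∀ s ∈ Icc (0 : ℝ) 1, |D₂.ω s - D₁.ω s| ≤ r * (s * (1 - s))

/- The defect vanishes somewhere, so `D₂.m - D₁.m` is controlled by the parameter defect there. -/
theorem close_of_abs_paramDefect_le {D₁ D₂ : ConnectionData} (h₁ : Profile D₁.F D₁.G D₁.ω 0 1)
    (h₂ : Profile D₂.F D₂.G D₂.ω 0 1) (hF₂ : ContinuousOn D₂.F (Icc 0 1)) {s₀ η β b ρ : ℝ}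
    (hη : 0 < η) (hsign : SignChange D₂.F 0 1 s₀) (hs₀ : s₀ ∈ Icc η (1 - η)) (hβ : 0 < β)
    (hBβ : ∀ s ∈ Icc (0 : ℝ) 1, β ≤ D₂.B s) (hBb : ∀ s ∈ Icc (0 : ℝ) 1, |D₂.B s| ≤ b)
    (hρ : ∀ s ∈ Ioo (0 : ℝ) 1, |paramDefect D₁ D₂ s| ≤ ρ) :
    Close D₁ D₂ (max (1 / β) ((1 + b / β) / η) * ρ) := by
  have hρ0 : 0 ≤ ρ := (abs_nonneg _).trans (hρ s₀ hsign.mem)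
  have hb : 0 ≤ b := (abs_nonneg _).trans (hBb s₀ (Ioo_subset_Icc_self hsign.mem))
  have hm : |D₂.m - D₁.m| ≤ 1 / β * ρ := by
    obtain ⟨s, hs, h0⟩ :=
      h₁.exists_defect_eq_zero h₂ (hF₂.mono Ioo_subset_Icc_self) hsign
    have hB := hBβ s (Ioo_subset_Icc_self hs)
    rw [defect_eq] at h0
    rw [one_div_mul_eq_div, le_div_iff₀ hβ]
    calc |D₂.m - D₁.m| * β ≤ |D₂.m - D₁.m| * |D₂.B s| :=
          mul_le_mul_of_nonneg_left (hB.trans (le_abs_self _)) (abs_nonneg _)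
      _ = |paramDefect D₁ D₂ s| := by
        rw [← abs_mul, ← abs_neg, eq_neg_of_add_eq_zero_right h0, neg_neg]
      _ ≤ ρ := hρ s hs
  have hdefect : ∀ s ∈ Ioo (0 : ℝ) 1, |defect D₁.F D₁.G D₁.ω D₂.F D₂.G s| ≤
      (1 + b / β) * ρ := fun s hs => by
    rw [defect_eq]
    calc _ ≤ |paramDefect D₁ D₂ s| + |(D₂.m - D₁.m) * D₂.B s| := abs_add_le _ _
      _ ≤ ρ + 1 / β * ρ * b := by
        rw [abs_mul]
        exact add_le_add (hρ s hs)
          (mul_le_mul hm (hBb s (Ioo_subset_Icc_self hs)) (abs_nonneg _) (by positivity))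
      _ = (1 + b / β) * ρ := by ring
  have hη1 : 1 + b / β ≤ (1 + b / β) / η :=
    le_div_self (by positivity) hη (by linarith [hs₀.1, hs₀.2])
  have hω := h₁.abs_sub_le_mul h₂ hη hsign hs₀ hdefect
  have hη2 : 1 ≤ (1 + b / β) / η :=
    (le_add_of_nonneg_right (by positivity)).trans hη1
  refine ⟨fun s hs => (hρ s hs).trans ?_, hm.trans ?_, fun s hs => (hdefect s hs).trans ?_,
    fun s hs => (hω s hs).trans ?_⟩
  · exact le_mul_of_one_le_left hρ0 (hη2.trans (le_max_right _ _))
  · gcongr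
    exact le_max_left _ _
  · gcongr
    exact hη1.trans (le_max_right _ _)
  · have hw : 0 ≤ s * (1 - s) := mul_nonneg hs.1 (sub_nonneg.2 hs.2)
    rw [mul_div_right_comm]
    gcongr
    exact le_max_right _ _

end ConnectionData

open ConnectionData

/-- A family of connections over an open parameter set whose coefficients are `C¹` up to the
end points, where `F` vanishes transversally, uniformly in the parameter. -/
structure RegularFamily {P : Type*} [NormedAddCommGroup P] [NormedSpace ℝ P]
    (D : P → ConnectionData) (U : Set P) : Prop where
  isOpen : IsOpen U
  contDiffAt_F : ∀ p ∈ U, ∀ s ∈ Icc (0 : ℝ) 1,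
    ContDiffAt ℝ 1 (fun x : P × ℝ => (D x.1).F x.2) (p, s)
  contDiffAt_A : ∀ p ∈ U, ∀ s ∈ Icc (0 : ℝ) 1,
    ContDiffAt ℝ 1 (fun x : P × ℝ => (D x.1).A x.2) (p, s)
  contDiffAt_B : ∀ p ∈ U, ∀ s ∈ Icc (0 : ℝ) 1,
    ContDiffAt ℝ 1 (fun x : P × ℝ => (D x.1).B x.2) (p, s)
  lipschitz_F : ∀ p ∈ U, ∃ C, ∀ᶠ x : P × P in 𝓝 (p, p), ∀ s ∈ Icc (0 : ℝ) 1,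
    |(D x.1).F s - (D x.2).F s| ≤ C * ‖x.1 - x.2‖ * (s * (1 - s))
  B_pos : ∀ p ∈ U, ∀ s ∈ Icc (0 : ℝ) 1, 0 < (D p).B s
  F_zero : ∀ p ∈ U, (D p).F 0 = 0
  F_one : ∀ p ∈ U, (D p).F 1 = 0
  deriv_F_zero_pos : ∀ p ∈ U, 0 < deriv (D p).F 0
  deriv_F_one_pos : ∀ p ∈ U, 0 < deriv (D p).F 1
  exists_signChange : ∀ p ∈ U, ∃ s₀, SignChange (D p).F 0 1 s₀
  profile : ∀ p ∈ U, Profile (D p).F (D p).G (D p).ω 0 1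

/-- The derivative in the parameter, at `p`, of the parameter defect relative to `D p`. -/
def paramDeriv {P : Type*} [NormedAddCommGroup P] [NormedSpace ℝ P]
    (D : P → ConnectionData) (p : P) (s : ℝ) : P →L[ℝ] ℝ :=
  ((D p).ω s)⁻¹ • fderiv ℝ (fun q => (D q).F s) p + fderiv ℝ (fun q => (D q).A s) p +
    (D p).m • fderiv ℝ (fun q => (D q).B s) p

namespace RegularFamily

variable {P : Type*} [NormedAddCommGroup P] [NormedSpace ℝ P] {D : P → ConnectionData}
  {U : Set P} {p₀ : P}

theorem continuousOn_F (hD : RegularFamily D U) (hp : p₀ ∈ U) : ContinuousOn (D p₀).F (Icc 0 1) :=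
  continuousOn_right_of_continuousAt (H := fun p => (D p).F) fun s hs =>
    (hD.contDiffAt_F p₀ hp s hs).continuousAt

theorem continuousOn_A (hD : RegularFamily D U) (hp : p₀ ∈ U) : ContinuousOn (D p₀).A (Icc 0 1) :=
  continuousOn_right_of_continuousAt (H := fun p => (D p).A) fun s hs =>
    (hD.contDiffAt_A p₀ hp s hs).continuousAt

theorem continuousOn_B (hD : RegularFamily D U) (hp : p₀ ∈ U) : ContinuousOn (D p₀).B (Icc 0 1) :=
  continuousOn_right_of_continuousAt (H := fun p => (D p).B) fun s hs =>
    (hD.contDiffAt_B p₀ hp s hs).continuousAt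

theorem continuousOn_G (hD : RegularFamily D U) (hp : p₀ ∈ U) : ContinuousOn (D p₀).G (Icc 0 1) :=
  (hD.continuousOn_A hp).add (continuousOn_const.mul (hD.continuousOn_B hp))

theorem exists_mul_le (hD : RegularFamily D U) (hp : p₀ ∈ U) :
    ∃ k > 0, ∀ s ∈ Icc (0 : ℝ) 1, k * (s * (1 - s)) ≤ (D p₀).ω s :=
  (hD.profile p₀ hp).exists_mul_le (hD.continuousOn_G hp) (hD.F_zero p₀ hp) (hD.F_one p₀ hp)
    (differentiableAt_of_deriv_ne_zero (hD.deriv_F_zero_pos p₀ hp).ne').hasDerivAt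
    (differentiableAt_of_deriv_ne_zero (hD.deriv_F_one_pos p₀ hp).ne').hasDerivAt
    (hD.deriv_F_zero_pos p₀ hp) (hD.deriv_F_one_pos p₀ hp)

theorem continuousAt_F (hD : RegularFamily D U) (hp : p₀ ∈ U) {s : ℝ} (hs : s ∈ Icc (0 : ℝ) 1) :
    ContinuousAt (fun p => (D p).F s) p₀ :=
  (hD.contDiffAt_F p₀ hp s hs).continuousAt.comp (f := fun p => (p, s))
    (Continuous.prodMk_left s).continuousAt

theorem continuousAt_B (hD : RegularFamily D U) (hp : p₀ ∈ U) {s : ℝ} (hs : s ∈ Icc (0 : ℝ) 1) :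
    ContinuousAt (fun p => (D p).B s) p₀ :=
  (hD.contDiffAt_B p₀ hp s hs).continuousAt.comp (f := fun p => (p, s))
    (Continuous.prodMk_left s).continuousAt

theorem exists_eventually_signChange_mem_Icc (hD : RegularFamily D U) (hp : p₀ ∈ U) :
    ∃ η > 0, ∀ᶠ p in 𝓝 p₀, ∀ s₀, SignChange (D p).F 0 1 s₀ → s₀ ∈ Icc η (1 - η) := by
  obtain ⟨s₀, hs₀⟩ := hD.exists_signChange p₀ hp
  obtain ⟨h0, h1⟩ := hs₀.mem
  have hleft : ∀ᶠ p in 𝓝 p₀, 0 < (D p).F (s₀ / 2) :=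
    (hD.continuousAt_F hp ⟨by linarith, by linarith⟩).eventually
      (Ioi_mem_nhds (hs₀.pos _ ⟨by linarith, by linarith⟩))
  have hright : ∀ᶠ p in 𝓝 p₀, (D p).F ((s₀ + 1) / 2) < 0 :=
    (hD.continuousAt_F hp ⟨by linarith, by linarith⟩).eventually
      (Iio_mem_nhds (hs₀.neg _ ⟨by linarith, by linarith⟩))
  refine ⟨min (s₀ / 2) ((1 - s₀) / 2), lt_min (by linarith) (by linarith), ?_⟩
  filter_upwards [hleft, hright] with p hpos hneg t ht
  have hlt : s₀ / 2 ≤ t := by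
    by_contra! hlt
    linarith [ht.neg _ ⟨hlt, by linarith⟩]
  have hgt : t ≤ (s₀ + 1) / 2 := by
    by_contra! hgt
    linarith [ht.pos _ ⟨by linarith, hgt⟩]
  have hη₀ := min_le_left (s₀ / 2) ((1 - s₀) / 2)
  have hη₁ := min_le_right (s₀ / 2) ((1 - s₀) / 2)
  exact ⟨by linarith, by linarith⟩

theorem eventually_mem_and_mem (hD : RegularFamily D U) (hp : p₀ ∈ U) :
    ∀ᶠ x : P × P in 𝓝 (p₀, p₀), x.1 ∈ U ∧ x.2 ∈ U :=
  prod_mem_nhds (hD.isOpen.mem_nhds hp) (hD.isOpen.mem_nhds hp)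

theorem exists_eventually_abs_paramDefect_le (hD : RegularFamily D U) (hp : p₀ ∈ U)
    {l : Filter (P × P)} (hl : l ≤ 𝓝 (p₀, p₀)) {k M : ℝ} (hk : 0 < k)
    (hω : ∀ᶠ x in l, ∀ s ∈ Icc (0 : ℝ) 1, k * (s * (1 - s)) ≤ (D x.2).ω s)
    (hm : ∀ᶠ x in l, |(D x.2).m| ≤ M) :
    ∃ N, ∀ᶠ x in l, ∀ s ∈ Ioo (0 : ℝ) 1,
      |paramDefect (D x.2) (D x.1) s| ≤ N * ‖x.1 - x.2‖ := by
  obtain ⟨CF, hF⟩ := hD.lipschitz_F p₀ hp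
  obtain ⟨CA, hA⟩ := exists_eventually_forall_abs_sub_le (H := fun p => (D p).A) isCompact_Icc
    (hD.contDiffAt_A p₀ hp)
  obtain ⟨CB, hB⟩ := exists_eventually_forall_abs_sub_le (H := fun p => (D p).B) isCompact_Icc
    (hD.contDiffAt_B p₀ hp)
  refine ⟨CF / k + CA + M * CB, ?_⟩
  filter_upwards [hl hF, hl hA, hl hB, hω, hm] with x hF hA hB hω hm s hs
  have hs' := Ioo_subset_Icc_self hs
  have hw : 0 < s * (1 - s) := mul_pos hs.1 (sub_pos.2 hs.2)
  have hω0 : 0 < (D x.2).ω s := lt_of_lt_of_le (by positivity) (hω s hs')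
  have hFω : |((D x.1).F s - (D x.2).F s) / (D x.2).ω s| ≤ CF / k * ‖x.1 - x.2‖ := by
    rw [abs_div, abs_of_pos hω0, div_le_iff₀ hω0]
    have hC : 0 ≤ CF * ‖x.1 - x.2‖ :=
      nonneg_of_mul_nonneg_left ((abs_nonneg _).trans (hF s hs')) hw
    calc _ ≤ CF * ‖x.1 - x.2‖ * (s * (1 - s)) := hF s hs'
      _ = CF / k * ‖x.1 - x.2‖ * (k * (s * (1 - s))) := by field_simp
      _ ≤ _ := mul_le_mul_of_nonneg_left (hω s hs')
        (by rw [div_mul_eq_mul_div]; exact div_nonneg hC hk.le)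
  have hmB : |(D x.2).m * ((D x.1).B s - (D x.2).B s)| ≤ M * (CB * ‖x.1 - x.2‖) := by
    rw [abs_mul]
    exact mul_le_mul hm (hB s hs') (abs_nonneg _) ((abs_nonneg _).trans hm)
  calc _ ≤ CF / k * ‖x.1 - x.2‖ + CA * ‖x.1 - x.2‖ + M * (CB * ‖x.1 - x.2‖) :=
        (abs_add_three _ _ _).trans (add_le_add_three hFω (hA s hs') hmB)
    _ = _ := by ring

theorem exists_eventually_le_B (hD : RegularFamily D U) (hp : p₀ ∈ U) :
    ∃ β > 0, ∀ᶠ p in 𝓝 p₀, ∀ s ∈ Icc (0 : ℝ) 1, β ≤ (D p).B s := by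
  obtain ⟨β, hβ, hB⟩ := isCompact_Icc.exists_forall_le' (hD.continuousOn_B hp) (hD.B_pos p₀ hp)
  refine ⟨β / 2, half_pos hβ, isCompact_Icc.eventually_forall_of_forall_eventually fun s hs => ?_⟩
  exact (hD.contDiffAt_B p₀ hp s hs).continuousAt.eventually
    (Ici_mem_nhds ((half_lt_self hβ).trans_le (hB s hs)))

theorem exists_eventually_close (hD : RegularFamily D U) (hp : p₀ ∈ U)
    {l : Filter (P × P)} (hl : l ≤ 𝓝 (p₀, p₀)) {k M : ℝ} (hk : 0 < k)
    (hω : ∀ᶠ x in l, ∀ s ∈ Icc (0 : ℝ) 1, k * (s * (1 - s)) ≤ (D x.2).ω s)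
    (hm : ∀ᶠ x in l, |(D x.2).m| ≤ M) :
    ∃ N, ∀ᶠ x in l, Close (D x.2) (D x.1) (N * ‖x.1 - x.2‖) := by
  obtain ⟨N, hN⟩ := hD.exists_eventually_abs_paramDefect_le hp hl hk hω hm
  obtain ⟨η, hη, hs₀⟩ := hD.exists_eventually_signChange_mem_Icc hp
  obtain ⟨β, hβ, hBβ⟩ := hD.exists_eventually_le_B hp
  obtain ⟨b, hBb⟩ := exists_eventually_forall_abs_le (H := fun p => (D p).B) isCompact_Icc
    fun s hs => (hD.contDiffAt_B p₀ hp s hs).continuousAt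
  refine ⟨max (1 / β) ((1 + b / β) / η) * N, ?_⟩
  have hfst : Tendsto Prod.fst l (𝓝 p₀) := continuousAt_fst.mono_left hl
  filter_upwards [hN, hl (hD.eventually_mem_and_mem hp), hfst.eventually hs₀,
    hfst.eventually hBβ, hfst.eventually hBb] with x hN hxU hs₀ hBβ hBb
  obtain ⟨s₀, hsign⟩ := hD.exists_signChange x.1 hxU.1
  rw [mul_assoc]
  exact close_of_abs_paramDefect_le (hD.profile _ hxU.2) (hD.profile _ hxU.1)
    (hD.continuousOn_F hxU.1) hη hsign (hs₀ s₀ hsign) hβ hBβ hBb hN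

theorem exists_eventually_close_base (hD : RegularFamily D U) (hp : p₀ ∈ U) :
    ∃ N, ∀ᶠ p in 𝓝 p₀, Close (D p₀) (D p) (N * ‖p - p₀‖) := by
  obtain ⟨k, hk, hω⟩ := hD.exists_mul_le hp
  have hl : 𝓝 p₀ ×ˢ pure p₀ ≤ 𝓝 (p₀, p₀) := by
    rw [nhds_prod_eq]
    exact prod_mono_right _ (pure_le_nhds p₀)
  obtain ⟨N, hN⟩ := hD.exists_eventually_close hp hl hk
    (by simpa [prod_pure] using hω) (M := |(D p₀).m|) (by simp [prod_pure])
  exact ⟨N, by simpa [prod_pure] using hN⟩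

theorem continuousAt_m (hD : RegularFamily D U) (hp : p₀ ∈ U) :
    ContinuousAt (fun p => (D p).m) p₀ := by
  obtain ⟨N, hN⟩ := hD.exists_eventually_close_base hp
  have hlim : Tendsto (fun p => N * ‖p - p₀‖) (𝓝 p₀) (𝓝 0) :=
    Continuous.tendsto' (by fun_prop) _ _ (by simp)
  exact tendsto_iff_norm_sub_tendsto_zero.2 <| squeeze_zero' (.of_forall fun _ => norm_nonneg _)
    (hN.mono fun p hp => hp.abs_m_sub_le) hlim

theorem continuousAt_ω (hD : RegularFamily D U) (hp : p₀ ∈ U) {s : ℝ} (hs : s ∈ Icc (0 : ℝ) 1) :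
    ContinuousAt (fun p => (D p).ω s) p₀ := by
  obtain ⟨N, hN⟩ := hD.exists_eventually_close_base hp
  have hlim : Tendsto (fun p => N * ‖p - p₀‖ * (s * (1 - s))) (𝓝 p₀) (𝓝 0) :=
    Continuous.tendsto' (by fun_prop) _ _ (by simp)
  exact tendsto_iff_norm_sub_tendsto_zero.2 <| squeeze_zero' (.of_forall fun _ => norm_nonneg _)
    (hN.mono fun p hp => hp.abs_ω_sub_le s hs) hlim

theorem exists_eventually_mul_le (hD : RegularFamily D U) (hp : p₀ ∈ U) :
    ∃ k > 0, ∀ᶠ p in 𝓝 p₀, ∀ s ∈ Icc (0 : ℝ) 1, k * (s * (1 - s)) ≤ (D p).ω s := by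
  obtain ⟨k, hk, hω⟩ := hD.exists_mul_le hp
  obtain ⟨N, hN⟩ := hD.exists_eventually_close_base hp
  have hlim : Tendsto (fun p => N * ‖p - p₀‖) (𝓝 p₀) (𝓝 0) :=
    Continuous.tendsto' (by fun_prop) _ _ (by simp)
  refine ⟨k / 2, half_pos hk, ?_⟩
  filter_upwards [hN, hlim.eventually (Iio_mem_nhds (half_pos hk))] with p hclose hsmall s hs
  have hw : 0 ≤ s * (1 - s) := mul_nonneg hs.1 (sub_nonneg.2 hs.2)
  have hle := (abs_le.1 (hclose.abs_ω_sub_le s hs)).1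
  nlinarith [hω s hs, mul_le_mul_of_nonneg_right (mem_Iio.1 hsmall).le hw]

theorem exists_eventually_close_pair (hD : RegularFamily D U) (hp : p₀ ∈ U) :
    ∃ N, ∀ᶠ x : P × P in 𝓝 (p₀, p₀), Close (D x.2) (D x.1) (N * ‖x.1 - x.2‖) := by
  obtain ⟨k, hk, hω⟩ := hD.exists_eventually_mul_le hp
  have hm : ∀ᶠ p in 𝓝 p₀, |(D p).m| ≤ |(D p₀).m| + 1 :=
    (hD.continuousAt_m hp).abs.eventually (Iic_mem_nhds (lt_add_one _))
  have hsnd : Tendsto Prod.snd (𝓝 (p₀, p₀)) (𝓝 p₀) := continuousAt_snd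
  exact hD.exists_eventually_close hp le_rfl hk (hsnd.eventually hω) (hsnd.eventually hm)

theorem exists_eventually_abs_dampingRate_le (hD : RegularFamily D U) (hp : p₀ ∈ U) :
    ∃ Φ, ∀ᶠ x : P × P in 𝓝 (p₀, p₀), ∀ s ∈ Ioo (0 : ℝ) 1,
      |dampingRate (D x.2).ω (D x.1).F (D x.1).ω s| ≤ Φ / (s * (1 - s)) ^ 2 := by
  obtain ⟨k, hk, hω⟩ := hD.exists_eventually_mul_le hp
  obtain ⟨C, hC⟩ := exists_eventually_forall_abs_le (H := fun p => (D p).F) isCompact_Icc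
    fun s hs => (hD.contDiffAt_F p₀ hp s hs).continuousAt
  refine ⟨C / k ^ 2, ?_⟩
  filter_upwards [continuousAt_fst.eventually hω, continuousAt_snd.eventually hω,
    continuousAt_fst.eventually hC] with x hω₁ hω₂ hC s hs
  have hs' := Ioo_subset_Icc_self hs
  have hw : 0 < k * (s * (1 - s)) := mul_pos hk (mul_pos hs.1 (sub_pos.2 hs.2))
  have hω₁s := hω₁ s hs'
  have hω₂s := hω₂ s hs'
  have hden : (k * (s * (1 - s))) ^ 2 ≤ (D x.2).ω s * (D x.1).ω s := by
    rw [sq]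
    exact mul_le_mul hω₂s hω₁s hw.le (hw.le.trans hω₂s)
  rw [dampingRate, abs_div, abs_of_pos ((pow_pos hw 2).trans_le hden), div_div, ← mul_pow]
  exact div_le_div₀ ((abs_nonneg _).trans (hC s hs')) (hC s hs') (pow_pos hw 2) hden

theorem exists_eventually_factor_le (hD : RegularFamily D U) (hp : p₀ ∈ U) :
    ∃ C, ∀ᶠ x : P × P in 𝓝 (p₀, p₀), ∀ s ∈ Ioo (0 : ℝ) 1, factor (D x.2) (D x.1) s ≤ C := by
  obtain ⟨Φ, hΦ⟩ := hD.exists_eventually_abs_dampingRate_le hp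
  obtain ⟨η, hη, hs₀⟩ := hD.exists_eventually_signChange_mem_Icc hp
  refine ⟨Real.exp (Φ / (η * η) ^ 2), ?_⟩
  filter_upwards [hΦ, continuousAt_fst.eventually hs₀, hD.eventually_mem_and_mem hp]
    with x hΦ hs₀ hxU s hs
  obtain ⟨s₀, hsign⟩ := hD.exists_signChange x.1 hxU.1
  obtain ⟨hηs, hsη⟩ := hs₀ s₀ hsign
  have hΦ0 : 0 ≤ Φ := by
    have hΦ2 := (abs_nonneg _).trans (hΦ (1 / 2) ⟨by norm_num, by norm_num⟩)
    norm_num at hΦ2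
    linarith
  have hJ : ∀ t ∈ uIoc (1 / 2) s₀,
      ‖dampingRate (D x.2).ω (D x.1).F (D x.1).ω t‖ ≤ Φ / (η * η) ^ 2 := fun t ht => by
    have htη : t ∈ Icc η (1 - η) := uIoc_subset_uIcc.trans
      (uIcc_subset_Icc ⟨by linarith, by linarith⟩ ⟨hηs, hsη⟩) ht
    have ht1 : η ≤ 1 - t := by linarith [htη.2]
    refine (hΦ t ⟨by linarith [htη.1], by linarith⟩).trans ?_
    have ht0 : 0 ≤ t := hη.le.trans htη.1
    gcongr
    exact htη.1
  calc factor (D x.2) (D x.1) s ≤ factor (D x.2) (D x.1) s₀ :=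
        (hsign.dampingRate (hD.profile _ hxU.2) (hD.profile _ hxU.1)).integratingFactor_le
          (continuousOn_dampingRate (hD.profile _ hxU.2) (hD.profile _ hxU.1)
            ((hD.continuousOn_F hxU.1).mono Ioo_subset_Icc_self)) ⟨by norm_num, by norm_num⟩ hs
    _ ≤ Real.exp (Φ / (η * η) ^ 2 * |s₀ - 1 / 2|) := Real.exp_le_exp.2 <|
        (le_abs_self _).trans (intervalIntegral.norm_integral_le_of_norm_le_const hJ)
    _ ≤ Real.exp (Φ / (η * η) ^ 2) := by
      refine Real.exp_le_exp.2 (mul_le_of_le_one_right (by positivity) ?_)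
      rw [abs_le]
      constructor <;> linarith

/- On each compact subinterval the damping rates converge boundedly. -/
theorem tendsto_factor (hD : RegularFamily D U) (hp : p₀ ∈ U) {s : ℝ} (hs : s ∈ Ioo (0 : ℝ) 1) :
    Tendsto (fun x : P × P => factor (D x.2) (D x.1) s) (𝓝 (p₀, p₀))
      (𝓝 (factor (D p₀) (D p₀) s)) := by
  obtain ⟨Φ, hΦ⟩ := hD.exists_eventually_abs_dampingRate_le hp
  have hsub : uIcc (1 / 2) s ⊆ Ioo (0 : ℝ) 1 :=
    ordConnected_Ioo.uIcc_subset ⟨by norm_num, by norm_num⟩ hs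
  have hfst : Tendsto Prod.fst (𝓝 (p₀, p₀)) (𝓝 p₀) := continuousAt_fst
  have hsnd : Tendsto Prod.snd (𝓝 (p₀, p₀)) (𝓝 p₀) := continuousAt_snd
  refine (Real.continuous_exp.tendsto _).comp
    (intervalIntegral.tendsto_integral_filter_of_dominated_convergence
      (fun t => Φ / (t * (1 - t)) ^ 2) ?_ ?_ ?_ ?_)
  · filter_upwards [hD.eventually_mem_and_mem hp] with x hxU
    exact ((continuousOn_dampingRate (hD.profile _ hxU.2) (hD.profile _ hxU.1)
      ((hD.continuousOn_F hxU.1).mono Ioo_subset_Icc_self)).mono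
        (uIoc_subset_uIcc.trans hsub)).aestronglyMeasurable measurableSet_uIoc
  · filter_upwards [hΦ] with x hΦ
    exact .of_forall fun t ht => hΦ t (hsub (uIoc_subset_uIcc ht))
  · refine ContinuousOn.intervalIntegrable (continuousOn_const.div (by fun_prop) fun t ht => ?_)
    have ht := hsub ht
    exact pow_ne_zero 2 (mul_pos ht.1 (sub_pos.2 ht.2)).ne'
  · refine .of_forall fun t ht => ?_
    have ht := hsub (uIoc_subset_uIcc ht)
    have ht' := Ioo_subset_Icc_self ht
    have hω := hD.continuousAt_ω hp ht'
    have hpos := (hD.profile p₀ hp).pos t ht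
    exact ((hD.continuousAt_F hp ht').tendsto.comp hfst).div
      ((hω.tendsto.comp hsnd).mul (hω.tendsto.comp hfst))
      (mul_pos hpos hpos).ne'

theorem isLittleO_paramDefect (hD : RegularFamily D U) (hp : p₀ ∈ U) {s : ℝ}
    (hs : s ∈ Ioo (0 : ℝ) 1) :
    (fun x : P × P => paramDefect (D x.2) (D x.1) s - paramDeriv D p₀ s (x.1 - x.2))
      =o[𝓝 (p₀, p₀)] fun x => x.1 - x.2 := by
  have hs' := Ioo_subset_Icc_self hs
  have hstrict : ∀ {H : P → ℝ → ℝ}, ContDiffAt ℝ 1 (fun x : P × ℝ => H x.1 x.2) (p₀, s) →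
      HasStrictFDerivAt (fun p => H p s) (fderiv ℝ (fun p => H p s) p₀) p₀ := fun hH =>
    (hH.comp p₀ (f := fun p => (p, s)) (by fun_prop)).hasStrictFDerivAt one_ne_zero
  have hωinv : ContinuousAt (fun p => ((D p).ω s)⁻¹) p₀ :=
    (hD.continuousAt_ω hp hs').inv₀ ((hD.profile p₀ hp).pos s hs).ne'
  refine (((isLittleO_mul_sub_of_hasStrictFDerivAt
    (hstrict (H := fun p => (D p).F) (hD.contDiffAt_F p₀ hp s hs')) hωinv).add
    (hstrict (H := fun p => (D p).A) (hD.contDiffAt_A p₀ hp s hs')).isLittleO).add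
    (isLittleO_mul_sub_of_hasStrictFDerivAt
      (hstrict (H := fun p => (D p).B) (hD.contDiffAt_B p₀ hp s hs'))
      (hD.continuousAt_m hp))).congr_left fun x => ?_
  simp only [paramDefect, paramDeriv, add_apply, smul_apply, smul_eq_mul]
  ring

theorem exists_norm_paramDeriv_le (hD : RegularFamily D U) (hp : p₀ ∈ U) :
    ∃ N, ∀ s ∈ Ioo (0 : ℝ) 1, ‖paramDeriv D p₀ s‖ ≤ N := by
  obtain ⟨N, hN⟩ := hD.exists_eventually_close_base hp
  refine ⟨|N|, fun s hs => ?_⟩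
  have hslice : Tendsto (fun p => (p, p₀)) (𝓝 p₀) (𝓝 (p₀, p₀)) :=
    (Continuous.prodMk_left p₀).tendsto p₀
  have hself : paramDefect (D p₀) (D p₀) s = 0 := by simp [paramDefect]
  have hderiv : HasFDerivAt (fun p => paramDefect (D p₀) (D p) s) (paramDeriv D p₀ s) p₀ :=
    hasFDerivAt_iff_isLittleO.2 <|
      ((hD.isLittleO_paramDefect hp hs).comp_tendsto hslice).congr_left fun p => by
        simp only [Function.comp_apply, hself, sub_zero]
  refine hderiv.le_of_lip' (abs_nonneg N) ?_
  filter_upwards [hN] with p hclose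
  rw [hself, sub_zero]
  exact (hclose.abs_paramDefect_le s hs).trans
    (mul_le_mul_of_nonneg_right (le_abs_self N) (norm_nonneg _))

theorem continuousOn_paramDeriv (hD : RegularFamily D U) (hp : p₀ ∈ U) :
    ContinuousOn (paramDeriv D p₀) (Ioo 0 1) := by
  have hF := continuousOn_fderiv_left (H := fun p => (D p).F) (hD.contDiffAt_F p₀ hp)
  have hA := continuousOn_fderiv_left (H := fun p => (D p).A) (hD.contDiffAt_A p₀ hp)
  have hB := continuousOn_fderiv_left (H := fun p => (D p).B) (hD.contDiffAt_B p₀ hp)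
  have hω := ((hD.profile p₀ hp).continuousOn.mono Ioo_subset_Icc_self).inv₀
    fun s hs => ((hD.profile p₀ hp).pos s hs).ne'
  exact ((hω.smul (hF.mono Ioo_subset_Icc_self)).add (hA.mono Ioo_subset_Icc_self)).add
    (ContinuousOn.smul (f := fun _ => (D p₀).m) continuousOn_const (hB.mono Ioo_subset_Icc_self))

theorem continuousOn_factor (hD : RegularFamily D U) {p q : P} (hp : p ∈ U) (hq : q ∈ U) :
    ContinuousOn (factor (D p) (D q)) (Ioo 0 1) := fun _ hs =>
  (hasDerivAt_integratingFactor (continuousOn_dampingRate (hD.profile p hp) (hD.profile q hq)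
    ((hD.continuousOn_F hq).mono Ioo_subset_Icc_self)) ⟨by norm_num, by norm_num⟩
    hs).continuousAt.continuousWithinAt

theorem continuousOn_defect (hD : RegularFamily D U) {p q : P} (hp : p ∈ U) (hq : q ∈ U) :
    ContinuousOn (defect (D p).F (D p).G (D p).ω (D q).F (D q).G) (Ioo 0 1) :=
  ((((hD.continuousOn_F hq).sub (hD.continuousOn_F hp)).mono Ioo_subset_Icc_self).div
    ((hD.profile p hp).continuousOn.mono Ioo_subset_Icc_self)
    fun s hs => ((hD.profile p hp).pos s hs).ne').add
    (((hD.continuousOn_G hq).sub (hD.continuousOn_G hp)).mono Ioo_subset_Icc_self)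

theorem isLittleO_factor_mul_defect (hD : RegularFamily D U) (hp : p₀ ∈ U) {s : ℝ}
    (hs : s ∈ Ioo (0 : ℝ) 1) :
    (fun x : P × P => factor (D x.2) (D x.1) s *
        defect (D x.2).F (D x.2).G (D x.2).ω (D x.1).F (D x.1).G s -
      ((factor (D p₀) (D p₀) s • paramDeriv D p₀ s) (x.1 - x.2) +
        ((D x.1).m - (D x.2).m) * (factor (D p₀) (D p₀) s • (D p₀).B s)))
      =o[𝓝 (p₀, p₀)] fun x => x.1 - x.2 := by
  obtain ⟨N, hN⟩ := hD.exists_eventually_close_pair hp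
  have hdefect : (fun x : P × P => defect (D x.2).F (D x.2).G (D x.2).ω (D x.1).F (D x.1).G s)
      =O[𝓝 (p₀, p₀)] fun x => x.1 - x.2 :=
    .of_bound N (hN.mono fun x hx => hx.abs_defect_le s hs)
  have hm : (fun x : P × P => (D x.1).m - (D x.2).m) =O[𝓝 (p₀, p₀)] fun x => x.1 - x.2 :=
    .of_bound N (hN.mono fun x hx => hx.abs_m_sub_le)
  have hfactor : (fun x : P × P => factor (D x.2) (D x.1) s - factor (D p₀) (D p₀) s)
      =o[𝓝 (p₀, p₀)] fun _ => (1 : ℝ) :=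
    (Asymptotics.isLittleO_one_iff ℝ).2 (tendsto_sub_nhds_zero_iff.2 (hD.tendsto_factor hp hs))
  have hfst : Tendsto Prod.fst (𝓝 (p₀, p₀)) (𝓝 p₀) := continuousAt_fst
  have hB : (fun x : P × P => (D x.1).B s - (D p₀).B s) =o[𝓝 (p₀, p₀)] fun _ => (1 : ℝ) :=
    (Asymptotics.isLittleO_one_iff ℝ).2 (tendsto_sub_nhds_zero_iff.2
      ((hD.continuousAt_B hp (Ioo_subset_Icc_self hs)).tendsto.comp hfst))
  have h₁ := hfactor.smul_isBigO hdefect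
  have h₂ := hB.smul_isBigO hm
  simp only [one_smul] at h₁ h₂
  refine ((h₁.add ((hD.isLittleO_paramDefect hp hs).const_mul_left (factor (D p₀) (D p₀) s))).add
    (h₂.const_mul_left (factor (D p₀) (D p₀) s))).congr_left fun x => ?_
  simp only [defect_eq, smul_apply, smul_eq_mul]
  ring

theorem exists_eventually_abs_factor_mul_defect_le (hD : RegularFamily D U) (hp : p₀ ∈ U) :
    ∃ M, ∀ᶠ x : P × P in 𝓝 (p₀, p₀), ∀ s ∈ Ioo (0 : ℝ) 1, |factor (D x.2) (D x.1) s *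
      defect (D x.2).F (D x.2).G (D x.2).ω (D x.1).F (D x.1).G s| ≤ M * ‖x.1 - x.2‖ := by
  obtain ⟨N, hN⟩ := hD.exists_eventually_close_pair hp
  obtain ⟨C, hC⟩ := hD.exists_eventually_factor_le hp
  refine ⟨C * N, ?_⟩
  filter_upwards [hN, hC] with x hclose hC s hs
  have hE : 0 < factor (D x.2) (D x.1) s := integratingFactor_pos _ _ _
  rw [abs_mul, abs_of_pos hE, mul_assoc]
  exact mul_le_mul (hC s hs) (hclose.abs_defect_le s hs) (abs_nonneg _) (hE.le.trans (hC s hs))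

theorem integrableOn_factor_mul_defect (hD : RegularFamily D U) {p q : P} (hp : p ∈ U)
    (hq : q ∈ U) {M : ℝ} (hM : ∀ s ∈ Ioo (0 : ℝ) 1,
      |factor (D p) (D q) s * defect (D p).F (D p).G (D p).ω (D q).F (D q).G s| ≤ M) :
    IntegrableOn (fun s =>
      factor (D p) (D q) s * defect (D p).F (D p).G (D p).ω (D q).F (D q).G s) (Ioo 0 1) :=
  integrableOn_Ioo_of_continuousOn_of_bounded
    ((hD.continuousOn_factor hp hq).mul (hD.continuousOn_defect hp hq)) hM

theorem integral_factor_mul_defect (hD : RegularFamily D U) {p q : P} (hp : p ∈ U) (hq : q ∈ U)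
    {M : ℝ} (hM : ∀ s ∈ Ioo (0 : ℝ) 1,
      |factor (D p) (D q) s * defect (D p).F (D p).G (D p).ω (D q).F (D q).G s| ≤ M) :
    ∫ s in Ioo (0 : ℝ) 1,
      factor (D p) (D q) s * defect (D p).F (D p).G (D p).ω (D q).F (D q).G s = 0 := by
  obtain ⟨s₀, hsign⟩ := hD.exists_signChange q hq
  exact (hD.profile p hp).integral_integratingFactor_mul_defect (hD.profile q hq)
    ((hD.continuousOn_F hq).mono Ioo_subset_Icc_self) hsign ⟨by norm_num, by norm_num⟩
    (hD.integrableOn_factor_mul_defect hp hq hM)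

theorem integrableOn_factor_smul (hD : RegularFamily D U) (hp : p₀ ∈ U) {E : Type*}
    [NormedAddCommGroup E] [NormedSpace ℝ E] {Φ : ℝ → E} {N : ℝ} (hΦ : ContinuousOn Φ (Ioo 0 1))
    (hN : ∀ s ∈ Ioo (0 : ℝ) 1, ‖Φ s‖ ≤ N) :
    IntegrableOn (fun s => factor (D p₀) (D p₀) s • Φ s) (Ioo 0 1) := by
  obtain ⟨C, hC⟩ := hD.exists_eventually_factor_le hp
  refine integrableOn_Ioo_of_continuousOn_of_bounded (M := C * N)
    ((hD.continuousOn_factor hp hp).smul hΦ) fun s hs => ?_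
  have hE : 0 < factor (D p₀) (D p₀) s := integratingFactor_pos _ _ _
  rw [norm_smul, Real.norm_of_nonneg hE.le]
  exact mul_le_mul (hC.self_of_nhds s hs) (hN s hs) (norm_nonneg _)
    (hE.le.trans (hC.self_of_nhds s hs))

theorem integrableOn_factor_smul_B (hD : RegularFamily D U) (hp : p₀ ∈ U) :
    IntegrableOn (fun s => factor (D p₀) (D p₀) s • (D p₀).B s) (Ioo 0 1) := by
  obtain ⟨b, hb⟩ := isCompact_Icc.exists_bound_of_continuousOn (hD.continuousOn_B hp)
  exact hD.integrableOn_factor_smul hp ((hD.continuousOn_B hp).mono Ioo_subset_Icc_self)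
    fun s hs => hb s (Ioo_subset_Icc_self hs)

theorem integrableOn_factor_smul_paramDeriv (hD : RegularFamily D U) (hp : p₀ ∈ U) :
    IntegrableOn (fun s => factor (D p₀) (D p₀) s • paramDeriv D p₀ s) (Ioo 0 1) := by
  obtain ⟨N, hN⟩ := hD.exists_norm_paramDeriv_le hp
  exact hD.integrableOn_factor_smul hp (hD.continuousOn_paramDeriv hp) hN

theorem integral_factor_smul_B_pos (hD : RegularFamily D U) (hp : p₀ ∈ U) :
    0 < ∫ s in Ioo (0 : ℝ) 1, factor (D p₀) (D p₀) s • (D p₀).B s := by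
  rw [← integral_Ioc_eq_integral_Ioo, ← intervalIntegral.integral_of_le zero_le_one]
  exact intervalIntegral.intervalIntegral_pos_of_pos_on
    ((intervalIntegrable_iff_integrableOn_Ioo_of_le zero_le_one).2
      (hD.integrableOn_factor_smul_B hp))
    (fun s hs => mul_pos (integratingFactor_pos _ _ _) (hD.B_pos p₀ hp s (Ioo_subset_Icc_self hs)))
    zero_lt_one

/- Melnikov's identity: the defect of two members of the family has weighted integral zero, and
its first-order part is linear in the difference of the parameters and in `m x.1 - m x.2`. -/
theorem isLittleO_integral_factor (hD : RegularFamily D U) (hp : p₀ ∈ U) :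
    (fun x : P × P =>
      (∫ s in Ioo (0 : ℝ) 1, factor (D p₀) (D p₀) s • paramDeriv D p₀ s) (x.1 - x.2) +
        ((D x.1).m - (D x.2).m) * ∫ s in Ioo (0 : ℝ) 1, factor (D p₀) (D p₀) s • (D p₀).B s)
      =o[𝓝 (p₀, p₀)] fun x => x.1 - x.2 := by
  obtain ⟨M, hM⟩ := hD.exists_eventually_abs_factor_mul_defect_le hp
  obtain ⟨N, hN⟩ := hD.exists_eventually_close_pair hp
  have hL := hD.integrableOn_factor_smul_paramDeriv hp
  have hB := hD.integrableOn_factor_smul_B hp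
  have hmem : ∀ᵐ s ∂volume.restrict (Ioo (0 : ℝ) 1), s ∈ Ioo (0 : ℝ) 1 :=
    ae_restrict_mem measurableSet_Ioo
  have key := isLittleO_integral_of_dominated (ν := volume.restrict (Ioo (0 : ℝ) 1))
    (M := fun s => M + (‖factor (D p₀) (D p₀) s • paramDeriv D p₀ s‖ +
      N * ‖factor (D p₀) (D p₀) s • (D p₀).B s‖))
    (((integrable_const M).add (hL.norm.add (hB.norm.const_mul N)))) ?_ ?_
    (hmem.mono fun s hs => hD.isLittleO_factor_mul_defect hp hs)
  · refine key.neg_left.congr' ?_ .rfl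
    filter_upwards [hD.eventually_mem_and_mem hp, hM] with x hxU hM
    have hlin : Integrable (fun s => (factor (D p₀) (D p₀) s • paramDeriv D p₀ s) (x.1 - x.2))
        (volume.restrict (Ioo (0 : ℝ) 1)) := hL.apply_continuousLinearMap _
    rw [integral_sub (hD.integrableOn_factor_mul_defect hxU.2 hxU.1 hM)
      (hlin.fun_add (hB.const_mul _)), hD.integral_factor_mul_defect hxU.2 hxU.1 hM,
      integral_add hlin (hB.const_mul _), integral_const_mul,
      ContinuousLinearMap.integral_apply hL]
    ring
  · filter_upwards [hD.eventually_mem_and_mem hp, hM] with x hxU hM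
    exact ((hD.integrableOn_factor_mul_defect hxU.2 hxU.1 hM).sub
      ((hL.apply_continuousLinearMap _).add (hB.const_mul _))).aestronglyMeasurable
  · filter_upwards [hM, hN] with x hM hclose
    filter_upwards [hmem] with s hs
    calc _ ≤ M * ‖x.1 - x.2‖ + (‖factor (D p₀) (D p₀) s • paramDeriv D p₀ s‖ * ‖x.1 - x.2‖ +
          N * ‖x.1 - x.2‖ * ‖factor (D p₀) (D p₀) s • (D p₀).B s‖) := by
          refine (norm_sub_le _ _).trans (add_le_add (hM s hs) ((norm_add_le _ _).trans
            (add_le_add (ContinuousLinearMap.le_opNorm _ _) ?_)))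
          rw [norm_mul]
          exact mul_le_mul_of_nonneg_right hclose.abs_m_sub_le (norm_nonneg _)
      _ = _ := by ring

theorem hasStrictFDerivAt_m (hD : RegularFamily D U) (hp : p₀ ∈ U) :
    HasStrictFDerivAt (fun p => (D p).m)
      (-(∫ s in Ioo (0 : ℝ) 1, factor (D p₀) (D p₀) s • (D p₀).B s)⁻¹ •
        ∫ s in Ioo (0 : ℝ) 1, factor (D p₀) (D p₀) s • paramDeriv D p₀ s) p₀ := by
  have hpos := hD.integral_factor_smul_B_pos hp
  refine .of_isLittleO (((hD.isLittleO_integral_factor hp).const_mul_left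
    (∫ s in Ioo (0 : ℝ) 1, factor (D p₀) (D p₀) s • (D p₀).B s)⁻¹).congr_left fun x => ?_)
  rw [smul_apply, smul_eq_mul]
  field_simp
  ring

theorem contDiffOn_m (hD : RegularFamily D U) : ContDiffOn ℝ 1 (fun p => (D p).m) U :=
  contDiffOn_one_of_hasStrictFDerivAt hD.isOpen fun _ hp => hD.hasStrictFDerivAt_m hp

end RegularFamily

end Family

section Velocity

theorem contDiffOn_one_of_hasDerivAt {f f' : ℝ → ℝ} {s : Set ℝ} (hs : IsOpen s)
    (hf : ∀ x ∈ s, HasDerivAt f (f' x) x) (hf' : ContinuousOn f' s) : ContDiffOn ℝ 1 f s := by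
  rw [← zero_add (1 : WithTop ℕ∞), contDiffOn_succ_iff_deriv_of_isOpen hs]
  exact ⟨fun x hx => (hf x hx).differentiableAt.differentiableWithinAt, by simp,
    contDiffOn_zero.2 (hf'.congr fun x hx => (hf x hx).deriv)⟩

theorem strictMonoOn_or_strictAntiOn_of_hasDerivAt_ne_zero {f f' : ℝ → ℝ} {D : Set ℝ}
    (hD : Convex ℝ D) (hf : ContinuousOn f D) (hd : ∀ x ∈ interior D, HasDerivAt f (f' x) x)
    (hne : ∀ x ∈ interior D, f' x ≠ 0) : StrictMonoOn f D ∨ StrictAntiOn f D := by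
  rcases hasDerivWithinAt_forall_lt_or_forall_gt_of_forall_ne hD.interior
    (fun x hx => (hd x hx).hasDerivWithinAt) hne with hneg | hpos
  · exact .inr (strictAntiOn_of_deriv_neg hD hf fun x hx => (hd x hx).deriv ▸ hneg x hx)
  · exact .inl (strictMonoOn_of_deriv_pos hD hf fun x hx => (hd x hx).deriv ▸ hpos x hx)

/-- An optimal velocity function `V` on `[0, ∞)` as in (A1), described by the shape of its
derivative: `V'` increases up to `U_M` and decreases afterwards, so that the line of slope
`K ∈ (V' 0, V' U_M)` is tangent to the graph of `V` at `u_M(K) < U_M < u_m(K)` only. -/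
structure OptimalVelocity (V V' : ℝ → ℝ) (UM : ℝ) (uMx umx : ℝ → ℝ) : Prop where
  continuousOn : ContinuousOn V (Ici 0)
  hasDerivAt : ∀ u, 0 < u → HasDerivAt V (V' u) u
  contDiffOn : ContDiffOn ℝ 1 V (Ioi 0)
  contDiffOn_deriv : ContDiffOn ℝ 1 V' (Ioi 0)
  deriv_zero_nonneg : 0 ≤ V' 0
  UM_pos : 0 < UM
  strictMonoOn_deriv : StrictMonoOn V' (Icc 0 UM)
  strictAntiOn_deriv : StrictAntiOn V' (Ici UM)
  uMax : UMaxHyp V' UM uMx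
  uMin : UMinHyp V' UM umx

variable {V V' V'' : ℝ → ℝ} {UM : ℝ} {uMx umx : ℝ → ℝ}

theorem A1.strictMonoOn_deriv (hA : A1 V V' V'' UM) : StrictMonoOn V' (Icc 0 UM) := by
  obtain ⟨-, hcont, hderiv, -, -, -, -, hUM, hmax, hzero⟩ := hA
  refine (strictMonoOn_or_strictAntiOn_of_hasDerivAt_ne_zero (f' := V'') (convex_Icc 0 UM)
    (hcont.mono Icc_subset_Ici_self) ?_ ?_).resolve_right fun hanti => ?_
  · rw [interior_Icc]
    exact fun x hx => hderiv x hx.1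
  · rw [interior_Icc]
    exact fun x hx h0 => hx.2.ne ((hzero x hx.1).1 h0)
  · exact (hmax (UM / 2) (by linarith)).not_gt
      (hanti ⟨by linarith, by linarith⟩ (right_mem_Icc.2 hUM.le) (by linarith))

theorem A1.strictAntiOn_deriv (hA : A1 V V' V'' UM) : StrictAntiOn V' (Ici UM) := by
  obtain ⟨-, hcont, hderiv, -, -, -, -, hUM, hmax, hzero⟩ := hA
  refine (strictMonoOn_or_strictAntiOn_of_hasDerivAt_ne_zero (f' := V'') (convex_Ici UM)
    (hcont.mono (Ici_subset_Ici.2 hUM.le)) ?_ ?_).resolve_left fun hmono => ?_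
  · rw [interior_Ici]
    exact fun x hx => hderiv x (hUM.trans hx)
  · rw [interior_Ici]
    exact fun x hx h0 => (mem_Ioi.1 hx).ne' ((hzero x (hUM.trans hx)).1 h0)
  · exact (hmax (UM + 1) (by linarith)).not_gt
      (hmono self_mem_Ici (mem_Ici.2 (by linarith)) (by linarith))

theorem A1.deriv_zero_nonneg (hA : A1 V V' V'' UM) : 0 ≤ V' 0 := by
  obtain ⟨-, hcont, -, -, hpos, -⟩ := hA
  have hlim : Tendsto V' (𝓝[>] 0) (𝓝 (V' 0)) :=
    (hcont 0 self_mem_Ici).mono_left (nhdsWithin_mono _ Ioi_subset_Ici_self)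
  exact ge_of_tendsto hlim (eventually_mem_nhdsWithin.mono fun u hu => (hpos u hu).le)

theorem A1.optimalVelocity (hA : A1 V V' V'' UM) (hM : UMaxHyp V' UM uMx)
    (hm : UMinHyp V' UM umx) : OptimalVelocity V V' UM uMx umx := by
  obtain ⟨hV, hV', hV'', hcont, -, -, -, hUM, -, -⟩ := id hA
  have hderiv : ∀ u, 0 < u → HasDerivAt V (V' u) u := fun u hu =>
    (hV u hu.le).hasDerivAt (Ici_mem_nhds hu)
  exact ⟨fun u hu => (hV u hu).continuousWithinAt, hderiv,
    contDiffOn_one_of_hasDerivAt isOpen_Ioi hderiv (hV'.mono Ioi_subset_Ici_self),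
    contDiffOn_one_of_hasDerivAt isOpen_Ioi hV'' hcont, hA.deriv_zero_nonneg, hUM,
    hA.strictMonoOn_deriv, hA.strictAntiOn_deriv, hM, hm⟩

namespace OptimalVelocity

variable {K u : ℝ}

theorem slope_pos (hV : OptimalVelocity V V' UM uMx umx) (hK : V' 0 < K) : 0 < K :=
  hV.deriv_zero_nonneg.trans_lt hK

theorem uMx_lt_umx (hV : OptimalVelocity V V' UM uMx umx) (hK : V' 0 < K) (hK' : K < V' UM) :
    0 < uMx K ∧ uMx K < UM ∧ UM < umx K :=
  ⟨(hV.uMax K hK hK').1.1, (hV.uMax K hK hK').1.2, (hV.uMin K (hV.slope_pos hK) hK').1⟩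

theorem deriv_lt_of_lt_uMx (hV : OptimalVelocity V V' UM uMx umx) (hK : V' 0 < K)
    (hK' : K < V' UM) (hu : 0 ≤ u) (huM : u < uMx K) : V' u < K := by
  obtain ⟨⟨h0, hUM⟩, hKeq⟩ := hV.uMax K hK hK'
  exact (hV.strictMonoOn_deriv ⟨hu, (huM.trans hUM).le⟩ ⟨h0.le, hUM.le⟩ huM).trans_eq hKeq

theorem lt_deriv_of_mem_Ioo (hV : OptimalVelocity V V' UM uMx umx) (hK : V' 0 < K)
    (hK' : K < V' UM) (hu : u ∈ Ioo (uMx K) (umx K)) : K < V' u := by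
  obtain ⟨⟨h0, hM⟩, hMeq⟩ := hV.uMax K hK hK'
  obtain ⟨hm, hmeq⟩ := hV.uMin K (hV.slope_pos hK) hK'
  rcases le_total u UM with h | h
  · exact hMeq.symm.trans_lt
      (hV.strictMonoOn_deriv ⟨h0.le, hM.le⟩ ⟨(h0.trans hu.1).le, h⟩ hu.1)
  · exact hmeq.symm.trans_lt (hV.strictAntiOn_deriv h hm.le hu.2)

theorem deriv_lt_of_umx_lt (hV : OptimalVelocity V V' UM uMx umx) (hK : V' 0 < K)
    (hK' : K < V' UM) (hu : umx K < u) : V' u < K := by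
  obtain ⟨hm, hmeq⟩ := hV.uMin K (hV.slope_pos hK) hK'
  exact (hV.strictAntiOn_deriv hm.le (hm.trans hu).le hu).trans_eq hmeq

theorem hasDerivAt_mul_sub (hV : OptimalVelocity V V' UM uMx umx) (K : ℝ) (hu : 0 < u) :
    HasDerivAt (fun u => K * u - V u) (K - V' u) u := by
  simpa using ((hasDerivAt_id u).const_mul K).fun_sub (hV.hasDerivAt u hu)

theorem continuousOn_mul_sub (hV : OptimalVelocity V V' UM uMx umx) (K : ℝ) :
    ContinuousOn (fun u => K * u - V u) (Ici 0) :=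
  (continuousOn_const.mul continuousOn_id).sub hV.continuousOn

theorem strictMonoOn_Icc (hV : OptimalVelocity V V' UM uMx umx) (hK : V' 0 < K)
    (hK' : K < V' UM) : StrictMonoOn (fun u => K * u - V u) (Icc 0 (uMx K)) := by
  refine strictMonoOn_of_deriv_pos (convex_Icc _ _)
    ((hV.continuousOn_mul_sub K).mono Icc_subset_Ici_self) fun u hu => ?_
  rw [interior_Icc] at hu
  rw [(hV.hasDerivAt_mul_sub K hu.1).deriv]
  exact sub_pos.2 (hV.deriv_lt_of_lt_uMx hK hK' hu.1.le hu.2)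

theorem strictAntiOn_Icc (hV : OptimalVelocity V V' UM uMx umx) (hK : V' 0 < K)
    (hK' : K < V' UM) : StrictAntiOn (fun u => K * u - V u) (Icc (uMx K) (umx K)) := by
  have h0 : 0 < uMx K := (hV.uMx_lt_umx hK hK').1
  refine strictAntiOn_of_deriv_neg (convex_Icc _ _)
    ((hV.continuousOn_mul_sub K).mono fun u hu => h0.le.trans hu.1) fun u hu => ?_
  rw [interior_Icc] at hu
  rw [(hV.hasDerivAt_mul_sub K (h0.trans hu.1)).deriv]
  exact sub_neg.2 (hV.lt_deriv_of_mem_Ioo hK hK' hu)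

theorem strictMonoOn_Ici (hV : OptimalVelocity V V' UM uMx umx) (hK : V' 0 < K)
    (hK' : K < V' UM) : StrictMonoOn (fun u => K * u - V u) (Ici (umx K)) := by
  have h0 : 0 < umx K := hV.UM_pos.trans (hV.uMx_lt_umx hK hK').2.2
  refine strictMonoOn_of_deriv_pos (convex_Ici _)
    ((hV.continuousOn_mul_sub K).mono (Ici_subset_Ici.2 h0.le)) fun u hu => ?_
  rw [interior_Ici] at hu
  rw [(hV.hasDerivAt_mul_sub K (h0.trans hu)).deriv]
  exact sub_pos.2 (hV.deriv_lt_of_umx_lt hK hK' hu)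

theorem mul_sub_le_cMf (hV : OptimalVelocity V V' UM uMx umx) (hK : V' 0 < K) (hK' : K < V' UM)
    (hu : u ∈ Icc 0 (umx K)) : K * u - V u ≤ cMf V uMx K := by
  obtain ⟨h0, hM, hm⟩ := hV.uMx_lt_umx hK hK'
  rcases le_total u (uMx K) with h | h
  · exact (hV.strictMonoOn_Icc hK hK').monotoneOn ⟨hu.1, h⟩ (right_mem_Icc.2 h0.le) h
  · exact (hV.strictAntiOn_Icc hK hK').antitoneOn (left_mem_Icc.2 (hM.trans hm).le) ⟨h, hu.2⟩ h

theorem cmf_le_mul_sub (hV : OptimalVelocity V V' UM uMx umx) (hK : V' 0 < K) (hK' : K < V' UM)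
    (hu : uMx K ≤ u) : cmf V umx K ≤ K * u - V u := by
  obtain ⟨-, hM, hm⟩ := hV.uMx_lt_umx hK hK'
  rcases le_total u (umx K) with h | h
  · exact (hV.strictAntiOn_Icc hK hK').antitoneOn ⟨hu, h⟩ (right_mem_Icc.2 (hM.trans hm).le) h
  · exact (hV.strictMonoOn_Ici hK hK').monotoneOn self_mem_Ici h h

theorem isOpen_D1 (hV : OptimalVelocity V V' UM uMx umx) : IsOpen (D1 V V' UM uMx umx) := by
  refine isOpen_iff_mem_nhds.2 fun ⟨K₀, c₀⟩ ⟨hK, hK', hc, hc'⟩ => ?_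
  obtain ⟨h0, hM, hm⟩ := hV.uMx_lt_umx hK hK'
  have hK_lo : ∀ᶠ p : ℝ × ℝ in 𝓝 (K₀, c₀), V' 0 < p.1 :=
    continuousAt_const.eventually_lt continuousAt_fst hK
  have hK_hi : ∀ᶠ p : ℝ × ℝ in 𝓝 (K₀, c₀), p.1 < V' UM :=
    continuousAt_fst.eventually_lt continuousAt_const hK'
  have hc_zero : ∀ᶠ p : ℝ × ℝ in 𝓝 (K₀, c₀), c0v V < p.2 :=
    continuousAt_const.eventually_lt continuousAt_snd (max_lt_iff.1 hc).1
  have hc_lo : ∀ᶠ p : ℝ × ℝ in 𝓝 (K₀, c₀), p.1 * umx K₀ - V (umx K₀) < p.2 :=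
    ContinuousAt.eventually_lt (by fun_prop) continuousAt_snd (max_lt_iff.1 hc).2
  have hc_hi : ∀ᶠ p : ℝ × ℝ in 𝓝 (K₀, c₀), p.2 < p.1 * uMx K₀ - V (uMx K₀) :=
    continuousAt_snd.eventually_lt (by fun_prop) hc'
  filter_upwards [hK_lo, hK_hi, hc_zero, hc_lo, hc_hi] with p hp hp' hp0 hlo hhi
  obtain ⟨-, hpM, hpm⟩ := hV.uMx_lt_umx hp hp'
  exact ⟨hp, hp', max_lt hp0 ((hV.cmf_le_mul_sub hp hp' (by linarith)).trans_lt hlo),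
    hhi.trans_le (hV.mul_sub_le_cMf hp hp' ⟨h0.le, by linarith⟩)⟩

end OptimalVelocity

end Velocity

section Zeros

variable {V V' : ℝ → ℝ} {UM : ℝ} {uMx umx : ℝ → ℝ} {K c u₁ u₀ u₂ u : ℝ}

theorem fTV_eq_zero_iff (hK : 0 < K) : fTV V K c u = 0 ↔ K * u - V u = c := by
  rw [fTV, div_eq_zero_iff, or_iff_left hK.ne', sub_eq_zero]

namespace ZerosD1

theorem mul_sub_eq (hz : ZerosD1 V K c u₁ u₀ u₂) (hK : 0 < K) :
    K * u₁ - V u₁ = c ∧ K * u₀ - V u₀ = c ∧ K * u₂ - V u₂ = c :=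
  ⟨(fTV_eq_zero_iff hK).1 hz.2.2.2.1, (fTV_eq_zero_iff hK).1 hz.2.2.2.2.1,
    (fTV_eq_zero_iff hK).1 hz.2.2.2.2.2.1⟩

theorem location (hz : ZerosD1 V K c u₁ u₀ u₂) (hV : OptimalVelocity V V' UM uMx umx)
    (hK : V' 0 < K) (hK' : K < V' UM) :
    u₁ ∈ Ioo 0 (uMx K) ∧ u₀ ∈ Ioo (uMx K) (umx K) ∧ umx K < u₂ := by
  obtain ⟨heq₁, heq₀, heq₂⟩ := hz.mul_sub_eq (hV.slope_pos hK)
  obtain ⟨h0, h10, h02, -⟩ := hz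
  have hlo : uMx K < u₀ := by
    by_contra! h
    exact (hV.strictMonoOn_Icc hK hK' ⟨h0.le, h10.le.trans h⟩ ⟨(h0.trans h10).le, h⟩ h10).ne
      (heq₁.trans heq₀.symm)
  have hhi : u₀ < umx K := by
    by_contra! h
    exact (hV.strictMonoOn_Ici hK hK' h (h.trans h02.le) h02).ne (heq₀.trans heq₂.symm)
  refine ⟨⟨h0, ?_⟩, ⟨hlo, hhi⟩, ?_⟩
  · by_contra! h
    exact (hV.strictAntiOn_Icc hK hK' ⟨h, (h10.trans hhi).le⟩ ⟨hlo.le, hhi.le⟩ h10).ne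
      (heq₀.trans heq₁.symm)
  · by_contra! h
    exact (hV.strictAntiOn_Icc hK hK' ⟨hlo.le, hhi.le⟩ ⟨(hlo.trans h02).le, h⟩ h02).ne
      (heq₂.trans heq₀.symm)

theorem signChange_fTV (hz : ZerosD1 V K c u₁ u₀ u₂) (hV : OptimalVelocity V V' UM uMx umx)
    (hK : V' 0 < K) (hK' : K < V' UM) : SignChange (fTV V K c) u₁ u₂ u₀ := by
  have hKpos := hV.slope_pos hK
  obtain ⟨heq₁, heq₀, heq₂⟩ := hz.mul_sub_eq hKpos
  obtain ⟨hu₁, hu₀, hu₂⟩ := hz.location hV hK hK'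
  refine ⟨⟨hz.2.1, hz.2.2.1⟩, fun u hu => div_pos (sub_pos.2 ?_) hKpos,
    fun u hu => div_neg_of_neg_of_pos (sub_neg.2 ?_) hKpos⟩
  · rcases le_total u (uMx K) with h | h
    · exact heq₁.symm.trans_lt (hV.strictMonoOn_Icc hK hK' ⟨hu₁.1.le, hu₁.2.le⟩
        ⟨(hu₁.1.trans hu.1).le, h⟩ hu.1)
    · exact heq₀.symm.trans_lt (hV.strictAntiOn_Icc hK hK' ⟨h, (hu.2.trans hu₀.2).le⟩
        ⟨hu₀.1.le, hu₀.2.le⟩ hu.2)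
  · rcases le_total u (umx K) with h | h
    · exact (hV.strictAntiOn_Icc hK hK' ⟨hu₀.1.le, hu₀.2.le⟩ ⟨(hu₀.1.trans hu.1).le, h⟩
        hu.1).trans_eq heq₀
    · exact (hV.strictMonoOn_Ici hK hK' h hu₂.le hu.2).trans_eq heq₂

theorem deriv_lt_left (hz : ZerosD1 V K c u₁ u₀ u₂) (hV : OptimalVelocity V V' UM uMx umx)
    (hK : V' 0 < K) (hK' : K < V' UM) : V' u₁ < K :=
  have hu₁ := (hz.location hV hK hK').1
  hV.deriv_lt_of_lt_uMx hK hK' hu₁.1.le hu₁.2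

theorem deriv_lt_right (hz : ZerosD1 V K c u₁ u₀ u₂) (hV : OptimalVelocity V V' UM uMx umx)
    (hK : V' 0 < K) (hK' : K < V' UM) : V' u₂ < K :=
  hV.deriv_lt_of_umx_lt hK hK' (hz.location hV hK hK').2.2

theorem lt_UM_lt (hz : ZerosD1 V K c u₁ u₀ u₂) (hV : OptimalVelocity V V' UM uMx umx)
    (hK : V' 0 < K) (hK' : K < V' UM) : u₁ < UM ∧ UM < u₂ :=
  have hloc := hz.location hV hK hK'
  have hord := hV.uMx_lt_umx hK hK'
  ⟨hloc.1.2.trans hord.2.1, hord.2.2.trans hloc.2.2⟩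

theorem eq_or_eq_of_deriv_lt (hz : ZerosD1 V K c u₁ u₀ u₂)
    (hV : OptimalVelocity V V' UM uMx umx) (hK : V' 0 < K) (hK' : K < V' UM) (hu : 0 < u)
    (hlt : V' u < K) (heq : K * u - V u = c) : u = u₁ ∨ u = u₂ := by
  rcases hz.2.2.2.2.2.2 u hu ((fTV_eq_zero_iff (hV.slope_pos hK)).2 heq) with h | rfl | h
  · exact .inl h
  · exact absurd hlt (hV.lt_deriv_of_mem_Ioo hK hK' (hz.location hV hK hK').2.1).not_gt
  · exact .inr h

end ZerosD1

theorem exists_hasStrictFDerivAt_of_left_inverse {V : ℝ → ℝ} {U : ℝ × ℝ → ℝ} {K₀ x₀ v : ℝ}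
    (hV : HasStrictDerivAt V v x₀) (hne : K₀ - v ≠ 0)
    (hU : ∀ᶠ q : ℝ × ℝ in 𝓝 (K₀, x₀), U (q.1, q.1 * q.2 - V q.2) = q.2) :
    ∃ U' : ℝ × ℝ →L[ℝ] ℝ, HasStrictFDerivAt U U' (K₀, K₀ * x₀ - V x₀) := by
  let T : ℝ × ℝ →L[ℝ] ℝ × ℝ := (ContinuousLinearMap.fst ℝ ℝ ℝ).prod
    (x₀ • ContinuousLinearMap.fst ℝ ℝ ℝ + (K₀ - v) • ContinuousLinearMap.snd ℝ ℝ ℝ)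
  let S : ℝ × ℝ →L[ℝ] ℝ × ℝ := (ContinuousLinearMap.fst ℝ ℝ ℝ).prod
    ((K₀ - v)⁻¹ • (ContinuousLinearMap.snd ℝ ℝ ℝ - x₀ • ContinuousLinearMap.fst ℝ ℝ ℝ))
  let e : (ℝ × ℝ) ≃L[ℝ] (ℝ × ℝ) := ContinuousLinearEquiv.equivOfInverse T S
    (fun x => by ext <;> simp [T, S, hne]) (fun x => by ext <;> simp [T, S, hne])
  have hmap : HasStrictFDerivAt (fun q : ℝ × ℝ => (q.1, q.1 * q.2 - V q.2))
      (e : ℝ × ℝ →L[ℝ] ℝ × ℝ) (K₀, x₀) := by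
    have hfst := hasStrictFDerivAt_fst (𝕜 := ℝ) (p := (K₀, x₀))
    have hsnd := hasStrictFDerivAt_snd (𝕜 := ℝ) (p := (K₀, x₀))
    refine (hfst.prodMk ((hfst.mul hsnd).sub
      (hV.comp_hasStrictFDerivAt (K₀, x₀) hsnd))).congr_fderiv ?_
    ext <;> simp [e, T]
  have hinv := hmap.to_local_left_inverse (g := fun p => (p.1, U p))
    (hU.mono fun q hq => Prod.ext rfl hq)
  exact ⟨_, hinv.snd⟩

theorem OptimalVelocity.contDiffOn_branch (hV : OptimalVelocity V V' UM uMx umx)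
    {U : ℝ × ℝ → ℝ} {S : Set ℝ} (hS : IsOpen S) (hmem : ∀ p ∈ D1 V V' UM uMx umx, U p ∈ S)
    (hpos : ∀ p ∈ D1 V V' UM uMx umx, 0 < U p)
    (hlt : ∀ p ∈ D1 V V' UM uMx umx, V' (U p) < p.1)
    (heq : ∀ p ∈ D1 V V' UM uMx umx, p.1 * U p - V (U p) = p.2)
    (huniq : ∀ p ∈ D1 V V' UM uMx umx, ∀ u ∈ S, 0 < u → V' u < p.1 →
      p.1 * u - V u = p.2 → u = U p) : ContDiffOn ℝ 1 U (D1 V V' UM uMx umx) := by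
  have hstrict : ∀ p ∈ D1 V V' UM uMx umx, ∃ U' : ℝ × ℝ →L[ℝ] ℝ, HasStrictFDerivAt U U' p := by
    intro p hp
    have hVp : ContDiffAt ℝ 1 V (U p) := hV.contDiffOn.contDiffAt (Ioi_mem_nhds (hpos p hp))
    have hV'p : ContinuousAt V' (U p) :=
      (hV.contDiffOn_deriv.contDiffAt (Ioi_mem_nhds (hpos p hp))).continuousAt
    have hVstrict := hVp.hasStrictDerivAt one_ne_zero
    rw [(hV.hasDerivAt _ (hpos p hp)).deriv] at hVstrict
    have hmap : ContinuousAt (fun q : ℝ × ℝ => (q.1, q.1 * q.2 - V q.2)) (p.1, U p) := by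
      have := hVp.continuousAt.comp' (f := Prod.snd) (x := (p.1, U p)) continuousAt_snd
      fun_prop
    have hD : ∀ᶠ q : ℝ × ℝ in 𝓝 (p.1, U p), (q.1, q.1 * q.2 - V q.2) ∈ D1 V V' UM uMx umx :=
      hmap.eventually_mem (by simpa only [heq p hp] using hV.isOpen_D1.mem_nhds hp)
    have hlt_near : ∀ᶠ q : ℝ × ℝ in 𝓝 (p.1, U p), V' q.2 < q.1 :=
      (hV'p.comp' (f := Prod.snd) (x := (p.1, U p)) continuousAt_snd).eventually_lt
        continuousAt_fst (hlt p hp)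
    have hS_near : ∀ᶠ q : ℝ × ℝ in 𝓝 (p.1, U p), q.2 ∈ S ∩ Ioi 0 :=
      continuousAt_snd.eventually ((hS.inter isOpen_Ioi).mem_nhds ⟨hmem p hp, hpos p hp⟩)
    have hinv : ∀ᶠ q : ℝ × ℝ in 𝓝 (p.1, U p), U (q.1, q.1 * q.2 - V q.2) = q.2 := by
      filter_upwards [hD, hlt_near, hS_near] with q hqD hqlt hqS
      exact (huniq _ hqD q.2 hqS.1 hqS.2 hqlt rfl).symm
    have := exists_hasStrictFDerivAt_of_left_inverse hVstrict (sub_pos.2 (hlt p hp)).ne' hinv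
    rwa [heq p hp] at this
  choose! U' hU' using hstrict
  exact contDiffOn_one_of_hasStrictFDerivAt hV.isOpen_D1 hU'

variable {U₁ U₀ U₂ : ℝ × ℝ → ℝ}

theorem OptimalVelocity.contDiffOn_zero_left (hV : OptimalVelocity V V' UM uMx umx)
    (hz : ∀ p ∈ D1 V V' UM uMx umx, ZerosD1 V p.1 p.2 (U₁ p) (U₀ p) (U₂ p)) :
    ContDiffOn ℝ 1 U₁ (D1 V V' UM uMx umx) :=
  hV.contDiffOn_branch isOpen_Iio
    (fun p hp => ((hz p hp).lt_UM_lt hV hp.1 hp.2.1).1) (fun p hp => (hz p hp).1)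
    (fun p hp => (hz p hp).deriv_lt_left hV hp.1 hp.2.1)
    (fun p hp => ((hz p hp).mul_sub_eq (hV.slope_pos hp.1)).1)
    fun p hp _ hu hu0 hlt heq =>
      ((hz p hp).eq_or_eq_of_deriv_lt hV hp.1 hp.2.1 hu0 hlt heq).resolve_right
        (hu.trans ((hz p hp).lt_UM_lt hV hp.1 hp.2.1).2).ne

theorem OptimalVelocity.contDiffOn_zero_right (hV : OptimalVelocity V V' UM uMx umx)
    (hz : ∀ p ∈ D1 V V' UM uMx umx, ZerosD1 V p.1 p.2 (U₁ p) (U₀ p) (U₂ p)) :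
    ContDiffOn ℝ 1 U₂ (D1 V V' UM uMx umx) :=
  hV.contDiffOn_branch isOpen_Ioi
    (fun p hp => ((hz p hp).lt_UM_lt hV hp.1 hp.2.1).2)
    (fun p hp => hV.UM_pos.trans ((hz p hp).lt_UM_lt hV hp.1 hp.2.1).2)
    (fun p hp => (hz p hp).deriv_lt_right hV hp.1 hp.2.1)
    (fun p hp => ((hz p hp).mul_sub_eq (hV.slope_pos hp.1)).2.2)
    fun p hp _ hu hu0 hlt heq =>
      ((hz p hp).eq_or_eq_of_deriv_lt hV hp.1 hp.2.1 hu0 hlt heq).resolve_left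
        (((hz p hp).lt_UM_lt hV hp.1 hp.2.1).1.trans hu).ne'

end Zeros

section Orbit

theorem profile_extendFrom {F G ω : ℝ → ℝ} {a b : ℝ} (hab : a < b)
    (hleft : Tendsto ω (𝓝[>] a) (𝓝 0)) (hright : Tendsto ω (𝓝[<] b) (𝓝 0))
    (hpos : ∀ s ∈ Ioo a b, 0 < ω s)
    (hderiv : ∀ s ∈ Ioo a b, HasDerivAt ω (F s / ω s + G s) s) :
    Profile F G (extendFrom (Ioo a b) ω) a b := by
  have hcont : ContinuousOn ω (Ioo a b) := fun s hs => (hderiv s hs).continuousAt.continuousWithinAt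
  have heq : ∀ s ∈ Ioo a b, extendFrom (Ioo a b) ω s = ω s := fun s hs =>
    extendFrom_extends hcont s hs
  refine ⟨continuousOn_Icc_extendFrom_Ioo hcont hleft hright,
    eq_lim_at_left_extendFrom_Ioo hab hleft, eq_lim_at_right_extendFrom_Ioo hab hright,
    fun s hs => (heq s hs).symm ▸ hpos s hs, fun s hs => ?_⟩
  rw [heq s hs]
  exact (hderiv s hs).congr_of_eventuallyEq
    (eventually_of_mem (isOpen_Ioo.mem_nhds hs) heq)

variable {u : ℝ → ℝ} {x₁ x₂ : ℝ}

theorem range_eq_Ioo_of_strictMono_of_tendsto (hu : StrictMono u) (hc : Continuous u)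
    (hbot : Tendsto u atBot (𝓝 x₁)) (htop : Tendsto u atTop (𝓝 x₂)) :
    range u = Ioo x₁ x₂ := by
  refine Subset.antisymm (range_subset_iff.2 fun z => ⟨?_, ?_⟩) fun x hx => ?_
  · exact (hu.monotone.le_of_tendsto hbot (z - 1)).trans_lt (hu (sub_one_lt z))
  · exact (hu (lt_add_one z)).trans_le (hu.monotone.ge_of_tendsto htop (z + 1))
  · obtain ⟨z₁, h₁⟩ := (hbot.eventually_lt_const hx.1).exists
    obtain ⟨z₂, h₂⟩ := (htop.eventually_const_lt hx.2).exists
    exact mem_range_of_exists_le_of_exists_ge hc ⟨z₁, h₁.le⟩ ⟨z₂, h₂.le⟩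

theorem map_atBot_atTop_of_range_eq_Ioo (hu : StrictMono u) (hrange : range u = Ioo x₁ x₂) :
    map u atBot = 𝓝[>] x₁ ∧ map u atTop = 𝓝[<] x₂ := by
  have hlt : x₁ < x₂ := nonempty_Ioo.1 (hrange ▸ range_nonempty u)
  let e : ℝ ≃o Ioo x₁ x₂ := (hu.orderIso u).trans (OrderIso.setCongr _ _ hrange)
  have he : u = (↑) ∘ e := rfl
  rw [he, ← map_map, ← map_map, e.map_atBot, e.map_atTop, map_coe_Ioo_atBot hlt,
    map_coe_Ioo_atTop hlt]
  exact ⟨rfl, rfl⟩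

theorem hasDerivAt_comp_invFun {w : ℝ → ℝ} {w' z : ℝ} (hinj : Function.Injective u)
    (hu : ∀ y, HasDerivAt u (w y) y) (hw : HasDerivAt w w' z) (hne : w z ≠ 0) :
    HasDerivAt (w ∘ Function.invFun u) (w' / w z) (u z) := by
  have hleft := Function.leftInverse_invFun hinj
  have hinv : HasDerivAt (Function.invFun u) (w z)⁻¹ (u z) :=
    ((hasStrictDerivAt_of_hasDerivAt_of_continuousAt (.of_forall hu)
      hw.continuousAt).to_local_left_inverse hne (.of_forall hleft)).hasDerivAt
  rw [div_eq_mul_inv]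
  exact HasDerivAt.comp _ (by rwa [hleft z]) hinv

theorem exists_profile_of_heteroclinic {F G w : ℝ → ℝ} (hu : ∀ z, HasDerivAt u (w z) z)
    (hw : ∀ z, HasDerivAt w (F (u z) + G (u z) * w z) z) (hpos : ∀ z, 0 < w z)
    (hubot : Tendsto u atBot (𝓝 x₁)) (hutop : Tendsto u atTop (𝓝 x₂))
    (hwbot : Tendsto w atBot (𝓝 0)) (hwtop : Tendsto w atTop (𝓝 0)) :
    ∃ W, Profile F G W x₁ x₂ := by
  have hmono : StrictMono u := strictMono_of_deriv_pos fun z => (hu z).deriv ▸ hpos z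
  have hcont : Continuous u := continuous_iff_continuousAt.2 fun z => (hu z).continuousAt
  have hrange := range_eq_Ioo_of_strictMono_of_tendsto hmono hcont hubot hutop
  obtain ⟨hmapbot, hmaptop⟩ := map_atBot_atTop_of_range_eq_Ioo hmono hrange
  have hinv : ∀ z, (w ∘ Function.invFun u) (u z) = w z := fun z =>
    congrArg w (Function.leftInverse_invFun hmono.injective z)
  refine ⟨_, profile_extendFrom (ω := w ∘ Function.invFun u)
    (nonempty_Ioo.1 (hrange ▸ range_nonempty u)) ?_ ?_ ?_ ?_⟩
  · rw [← hmapbot]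
    exact tendsto_map'_iff.2 (hwbot.congr fun z => (hinv z).symm)
  · rw [← hmaptop]
    exact tendsto_map'_iff.2 (hwtop.congr fun z => (hinv z).symm)
  · rw [← hrange, forall_mem_range]
    exact fun z => (hinv z).symm ▸ hpos z
  · rw [← hrange, forall_mem_range]
    intro z
    refine (hasDerivAt_comp_invFun hmono.injective hu (hw z) (hpos z).ne').congr_deriv ?_
    rw [hinv, add_div, mul_div_cancel_right₀ _ (hpos z).ne']

end Orbit

section TravelingWave

/-- `W` is the graph over `[u₁, u₂]` of a heteroclinic orbit of `u' = w`,
`w' = g₁ f + g₂ (σ f' + m) w` in the upper half-plane. A solution of (TV) with (HE1) gives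
`σ = 1`, `m = μ`; one with (HE2) gives `σ = -1`, `m = -μ` after `(z, w) ↦ (-z, -w)`. -/
abbrev WaveProfile (V V' κ : ℝ → ℝ) (τ K c σ m : ℝ) (W : ℝ → ℝ) (u₁ u₂ : ℝ) : Prop :=
  Profile (fun u => g1TV κ τ u * fTV V K c u)
    (fun u => g2TV κ τ u * (σ * fdTV V' K u + m)) W u₁ u₂

variable {V V' κ : ℝ → ℝ} {τ K c μ u₁ u₂ : ℝ}

theorem HasHE1.exists_waveProfile (h : HasHE1 V V' κ τ K c μ u₁ u₂) :
    ∃ W, WaveProfile V V' κ τ K c 1 μ W u₁ u₂ := by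
  obtain ⟨u, w, ⟨hu, hw⟩, -, hubot, hutop, hwbot, hwtop, hpos⟩ := h
  refine exists_profile_of_heteroclinic hu (fun z => (hw z).congr_deriv ?_) hpos hubot hutop
    hwbot hwtop
  rw [hTV, one_mul]

theorem HasHE2.exists_waveProfile (h : HasHE2 V V' κ τ K c μ u₁ u₂) :
    ∃ W, WaveProfile V V' κ τ K c (-1) (-μ) W u₁ u₂ := by
  obtain ⟨u, w, ⟨hu, hw⟩, -, hubot, hutop, hwbot, hwtop, hneg⟩ := h
  refine exists_profile_of_heteroclinic (u := fun z => u (-z)) (w := fun z => -w (-z))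
    (fun z => ?_) (fun z => ?_) (fun z => neg_pos.2 (hneg (-z)))
    (hutop.comp tendsto_neg_atBot_atTop) (hubot.comp tendsto_neg_atTop_atBot) ?_ ?_
  · simpa using! (hu (-z)).scomp z (hasDerivAt_neg z)
  · refine ((hw (-z)).scomp z (hasDerivAt_neg z)).neg.congr_deriv ?_
    rw [hTV, smul_eq_mul]
    ring
  · simpa using! (hwtop.comp tendsto_neg_atBot_atTop).neg
  · simpa using! (hwbot.comp tendsto_neg_atTop_atBot).neg

end TravelingWave

section VanishingAtEndpoints

theorem hasDerivAt_mul_of_eq_zero {f φ : ℝ → ℝ} {φ' s : ℝ} (hf : DifferentiableAt ℝ f s)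
    (hφ : HasDerivAt φ φ' s) (h0 : φ s = 0) : HasDerivAt (fun t => f t * φ t) (f s * φ') s :=
  (hf.hasDerivAt.mul hφ).congr_deriv (by rw [h0, mul_zero, zero_add])

theorem abs_le_mul_of_hasDerivAt_of_eq_zero {φ φ' : ℝ → ℝ} {C s : ℝ}
    (hφ : ∀ t ∈ Icc (0 : ℝ) 1, HasDerivAt φ (φ' t) t) (h0 : φ 0 = 0) (h1 : φ 1 = 0)
    (hC : ∀ t ∈ Icc (0 : ℝ) 1, |φ' t| ≤ C) (hs : s ∈ Icc (0 : ℝ) 1) :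
    |φ s| ≤ 2 * C * (s * (1 - s)) := by
  have hmean : ∀ t ∈ Icc (0 : ℝ) 1, |φ s - φ t| ≤ C * |s - t| := fun t ht =>
    (convex_Icc (0 : ℝ) 1).norm_image_sub_le_of_norm_hasDerivWithin_le
      (fun x hx => (hφ x hx).hasDerivWithinAt) hC ht hs
  have hleft := hmean 0 (left_mem_Icc.2 zero_le_one)
  have hright := hmean 1 (right_mem_Icc.2 zero_le_one)
  rw [h0, sub_zero, sub_zero, abs_of_nonneg hs.1] at hleft
  rw [h1, sub_zero, abs_sub_comm s 1, abs_of_nonneg (sub_nonneg.2 hs.2)] at hright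
  nlinarith [mul_le_mul_of_nonneg_right hleft (sub_nonneg.2 hs.2),
    mul_le_mul_of_nonneg_right hright hs.1]

variable {P : Type*} [NormedAddCommGroup P] [NormedSpace ℝ P] {G φ φ' : P → ℝ → ℝ} {p₀ : P}

/- Vanishing at both end points upgrades Lipschitz dependence of `φ'` on the parameter to Lipschitz
dependence of `φ` with the weight `s (1 - s)`. -/
theorem exists_eventually_abs_mul_sub_mul_le
    (hG : ∀ s ∈ Icc (0 : ℝ) 1, ContDiffAt ℝ 1 (fun x : P × ℝ => G x.1 x.2) (p₀, s))
    (hφ' : ∀ s ∈ Icc (0 : ℝ) 1, ContDiffAt ℝ 1 (fun x : P × ℝ => φ' x.1 x.2) (p₀, s))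
    (hφ : ∀ᶠ p in 𝓝 p₀, φ p 0 = 0 ∧ φ p 1 = 0 ∧
      ∀ s ∈ Icc (0 : ℝ) 1, HasDerivAt (φ p) (φ' p s) s) :
    ∃ C, ∀ᶠ x : P × P in 𝓝 (p₀, p₀), ∀ s ∈ Icc (0 : ℝ) 1,
      |G x.1 s * φ x.1 s - G x.2 s * φ x.2 s| ≤ C * ‖x.1 - x.2‖ * (s * (1 - s)) := by
  obtain ⟨CG, hCG⟩ := exists_eventually_forall_abs_le (H := G) isCompact_Icc
    fun s hs => (hG s hs).continuousAt
  obtain ⟨Cφ, hCφ⟩ := exists_eventually_forall_abs_le (H := φ') isCompact_Icc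
    fun s hs => (hφ' s hs).continuousAt
  obtain ⟨LG, hLG⟩ := exists_eventually_forall_abs_sub_le (H := G) isCompact_Icc hG
  obtain ⟨Lφ, hLφ⟩ := exists_eventually_forall_abs_sub_le (H := φ') isCompact_Icc hφ'
  refine ⟨CG * (2 * Lφ) + LG * (2 * Cφ), ?_⟩
  filter_upwards [continuousAt_fst.eventually hCG, continuousAt_snd.eventually hCφ,
    continuousAt_fst.eventually hφ, continuousAt_snd.eventually hφ, hLG, hLφ]
    with ⟨p, q⟩ hGp hφq ⟨hp0, hp1, hp⟩ ⟨hq0, hq1, hq⟩ hGpq hφpq s hs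
  have hsub : |φ p s - φ q s| ≤ 2 * (Lφ * ‖p - q‖) * (s * (1 - s)) :=
    abs_le_mul_of_hasDerivAt_of_eq_zero (φ := fun t => φ p t - φ q t)
      (fun t ht => (hp t ht).sub (hq t ht)) (by rw [hp0, hq0, sub_zero])
      (by rw [hp1, hq1, sub_zero]) hφpq hs
  have hval : |φ q s| ≤ 2 * Cφ * (s * (1 - s)) :=
    abs_le_mul_of_hasDerivAt_of_eq_zero hq hq0 hq1 hφq hs
  calc |G p s * φ p s - G q s * φ q s|
      = |G p s * (φ p s - φ q s) + (G p s - G q s) * φ q s| := by ring_nf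
    _ ≤ |G p s| * |φ p s - φ q s| + |G p s - G q s| * |φ q s| := by
        simpa only [abs_mul] using abs_add_le (G p s * (φ p s - φ q s)) ((G p s - G q s) * φ q s)
    _ ≤ CG * (2 * (Lφ * ‖p - q‖) * (s * (1 - s))) +
          LG * ‖p - q‖ * (2 * Cφ * (s * (1 - s))) :=
        add_le_add
          (mul_le_mul (hGp s hs) hsub (abs_nonneg _) ((abs_nonneg _).trans (hGp s hs)))
          (mul_le_mul (hGpq s hs) hval (abs_nonneg _) ((abs_nonneg _).trans (hGpq s hs)))
    _ = (CG * (2 * Lφ) + LG * (2 * Cφ)) * ‖p - q‖ * (s * (1 - s)) := by ring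

theorem SignChange.comp_affine {F : ℝ → ℝ} {u v s₀ : ℝ} (h : SignChange F u v s₀) :
    SignChange (fun s => F (u + (v - u) * s)) 0 1 ((s₀ - u) / (v - u)) := by
  obtain ⟨⟨hu, hv⟩, hpos, hneg⟩ := h
  have huv : 0 < v - u := sub_pos.2 (hu.trans hv)
  refine ⟨⟨div_pos (sub_pos.2 hu) huv, (div_lt_one huv).2 (sub_lt_sub_right hv u)⟩,
    fun s hs => hpos _ ⟨?_, ?_⟩, fun s hs => hneg _ ⟨?_, ?_⟩⟩
  · exact lt_add_of_pos_right u (mul_pos huv hs.1)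
  · linarith [(lt_div_iff₀' huv).1 hs.2]
  · linarith [(div_lt_iff₀' huv).1 hs.1]
  · linarith [mul_lt_mul_of_pos_left hs.2 huv]

theorem SignChange.pos_mul {F g : ℝ → ℝ} {a b s₀ : ℝ} (h : SignChange F a b s₀)
    (hg : ∀ s ∈ Ioo a b, 0 < g s) : SignChange (fun s => g s * F s) a b s₀ where
  mem := h.mem
  pos s hs := mul_pos (hg s ⟨hs.1, hs.2.trans h.mem.2⟩) (h.pos s hs)
  neg s hs := mul_neg_of_pos_of_neg (hg s ⟨h.mem.1.trans hs.1, hs.2⟩) (h.neg s hs)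

end VanishingAtEndpoints

section Coefficients

variable {κ : ℝ → ℝ} {τ u : ℝ}

theorem g2TV_eq_mul_g1TV (κ : ℝ → ℝ) (τ u : ℝ) : g2TV κ τ u = u / 2 * g1TV κ τ u := by
  rw [g2TV, g1TV, mul_assoc, div_mul_div_comm, mul_one]

theorem g1TV_pos (hκ : A2 κ) (hτ : 0 < τ) (hu : 0 < u) : 0 < g1TV κ τ u :=
  one_div_pos.2 (mul_pos hτ (hκ.2 _ (one_div_pos.2 hu)))

theorem g2TV_pos (hκ : A2 κ) (hτ : 0 < τ) (hu : 0 < u) : 0 < g2TV κ τ u := by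
  rw [g2TV_eq_mul_g1TV]
  exact mul_pos (half_pos hu) (g1TV_pos hκ hτ hu)

theorem contDiffAt_g1TV (hκ : A2 κ) (hτ : 0 < τ) (hu : 0 < u) : ContDiffAt ℝ 1 (g1TV κ τ) u := by
  have hκu : ContDiffAt ℝ 1 (fun v : ℝ => κ (1 / v)) u :=
    ContDiffAt.comp (f := fun v : ℝ => 1 / v) u
      (hκ.1.contDiffAt (Ioi_mem_nhds (one_div_pos.2 hu)))
      (contDiffAt_const.div contDiffAt_id hu.ne')
  exact contDiffAt_const.div (contDiffAt_const.mul hκu)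
    (mul_pos hτ (hκ.2 _ (one_div_pos.2 hu))).ne'

theorem contDiffAt_g2TV (hκ : A2 κ) (hτ : 0 < τ) (hu : 0 < u) : ContDiffAt ℝ 1 (g2TV κ τ) u := by
  rw [funext (g2TV_eq_mul_g1TV κ τ)]
  exact (contDiffAt_id.div_const 2).mul (contDiffAt_g1TV hκ hτ hu)

end Coefficients

section Rescaling

/-- The affine parametrization of `[U₁ p, U₂ p]` by `[0, 1]`. -/
def rescale (U₁ U₂ : ℝ × ℝ → ℝ) (p : ℝ × ℝ) (s : ℝ) : ℝ := U₁ p + (U₂ p - U₁ p) * s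

variable {U₁ U₂ : ℝ × ℝ → ℝ} {p : ℝ × ℝ} {s : ℝ}

theorem rescale_zero (U₁ U₂ : ℝ × ℝ → ℝ) (p : ℝ × ℝ) : rescale U₁ U₂ p 0 = U₁ p := by
  rw [rescale, mul_zero, add_zero]

theorem rescale_one (U₁ U₂ : ℝ × ℝ → ℝ) (p : ℝ × ℝ) : rescale U₁ U₂ p 1 = U₂ p := by
  rw [rescale, mul_one, add_sub_cancel]

theorem rescale_pos (h₁ : 0 < U₁ p) (h₁₂ : U₁ p < U₂ p) (hs : 0 ≤ s) : 0 < rescale U₁ U₂ p s :=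
  add_pos_of_pos_of_nonneg h₁ (mul_nonneg (sub_pos.2 h₁₂).le hs)

theorem hasDerivAt_rescale (U₁ U₂ : ℝ × ℝ → ℝ) (p : ℝ × ℝ) (s : ℝ) :
    HasDerivAt (rescale U₁ U₂ p) (U₂ p - U₁ p) s :=
  (((hasDerivAt_id s).const_mul (U₂ p - U₁ p)).const_add (U₁ p)).congr_deriv (mul_one _)

theorem contDiffAt_rescale_width (h₁ : ContDiffAt ℝ 1 U₁ p) (h₂ : ContDiffAt ℝ 1 U₂ p) (s : ℝ) :
    ContDiffAt ℝ 1 (fun x : (ℝ × ℝ) × ℝ => U₂ x.1 - U₁ x.1) (p, s) :=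
  h₂.fst'.sub h₁.fst'

theorem contDiffAt_rescale (h₁ : ContDiffAt ℝ 1 U₁ p) (h₂ : ContDiffAt ℝ 1 U₂ p) (s : ℝ) :
    ContDiffAt ℝ 1 (fun x : (ℝ × ℝ) × ℝ => rescale U₁ U₂ x.1 x.2) (p, s) :=
  h₁.fst'.add ((contDiffAt_rescale_width h₁ h₂ s).mul contDiffAt_snd)

theorem contDiffAt_comp_rescale {g : ℝ → ℝ} (h₁ : ContDiffAt ℝ 1 U₁ p) (h₂ : ContDiffAt ℝ 1 U₂ p)
    (hg : ContDiffAt ℝ 1 g (rescale U₁ U₂ p s)) :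
    ContDiffAt ℝ 1 (fun x : (ℝ × ℝ) × ℝ => g (rescale U₁ U₂ x.1 x.2)) (p, s) :=
  ContDiffAt.comp (f := fun x : (ℝ × ℝ) × ℝ => rescale U₁ U₂ x.1 x.2) (p, s) hg
    (contDiffAt_rescale h₁ h₂ s)

end Rescaling

section WaveFamily

/-- The connection data on `[0, 1]` of the profile `W p` over `[U₁ p, U₂ p]`, with `p = (K, c)`. -/
def waveConnection (V V' κ : ℝ → ℝ) (τ σ : ℝ) (m U₁ U₂ : ℝ × ℝ → ℝ) (W : ℝ × ℝ → ℝ → ℝ)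
    (p : ℝ × ℝ) : ConnectionData where
  F s := (U₂ p - U₁ p) * (g1TV κ τ (rescale U₁ U₂ p s) * fTV V p.1 p.2 (rescale U₁ U₂ p s))
  A s := (U₂ p - U₁ p) * (g2TV κ τ (rescale U₁ U₂ p s) * (σ * fdTV V' p.1 (rescale U₁ U₂ p s)))
  B s := (U₂ p - U₁ p) * g2TV κ τ (rescale U₁ U₂ p s)
  ω s := W p (rescale U₁ U₂ p s)
  m := m p

/-- Over `D₁`, a choice of zeros `U₁ < U₀ < U₂` of `f` and of wave profiles `W p` over
`[U₁ p, U₂ p]`, existing at the parameter value `m p`. -/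
structure WaveFamily (V V' κ : ℝ → ℝ) (τ UM : ℝ) (uMx umx : ℝ → ℝ) (σ : ℝ)
    (m U₁ U₀ U₂ : ℝ × ℝ → ℝ) (W : ℝ × ℝ → ℝ → ℝ) : Prop where
  velocity : OptimalVelocity V V' UM uMx umx
  kappa : A2 κ
  tau_pos : 0 < τ
  zeros : ∀ p ∈ D1 V V' UM uMx umx, ZerosD1 V p.1 p.2 (U₁ p) (U₀ p) (U₂ p)
  profile : ∀ p ∈ D1 V V' UM uMx umx,
    WaveProfile V V' κ τ p.1 p.2 σ (m p) (W p) (U₁ p) (U₂ p)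

namespace WaveFamily

variable {V V' κ : ℝ → ℝ} {τ UM : ℝ} {uMx umx : ℝ → ℝ} {σ : ℝ} {m U₁ U₀ U₂ : ℝ × ℝ → ℝ}
  {W : ℝ × ℝ → ℝ → ℝ} {p : ℝ × ℝ} {s : ℝ}

theorem slope_pos (hS : WaveFamily V V' κ τ UM uMx umx σ m U₁ U₀ U₂ W)
    (hp : p ∈ D1 V V' UM uMx umx) : 0 < p.1 :=
  hS.velocity.slope_pos hp.1

theorem width_pos (hS : WaveFamily V V' κ τ UM uMx umx σ m U₁ U₀ U₂ W)
    (hp : p ∈ D1 V V' UM uMx umx) : 0 < U₂ p - U₁ p :=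
  sub_pos.2 ((hS.zeros p hp).2.1.trans (hS.zeros p hp).2.2.1)

theorem rescale_pos (hS : WaveFamily V V' κ τ UM uMx umx σ m U₁ U₀ U₂ W)
    (hp : p ∈ D1 V V' UM uMx umx) (hs : 0 ≤ s) : 0 < rescale U₁ U₂ p s :=
  TrafficTW.rescale_pos (hS.zeros p hp).1 (sub_pos.1 (hS.width_pos hp)) hs

theorem contDiffAt_zeros (hS : WaveFamily V V' κ τ UM uMx umx σ m U₁ U₀ U₂ W)
    (hp : p ∈ D1 V V' UM uMx umx) : ContDiffAt ℝ 1 U₁ p ∧ ContDiffAt ℝ 1 U₂ p :=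
  have hD := hS.velocity.isOpen_D1.mem_nhds hp
  ⟨(hS.velocity.contDiffOn_zero_left hS.zeros).contDiffAt hD,
    (hS.velocity.contDiffOn_zero_right hS.zeros).contDiffAt hD⟩

theorem contDiffAt_width (hS : WaveFamily V V' κ τ UM uMx umx σ m U₁ U₀ U₂ W)
    (hp : p ∈ D1 V V' UM uMx umx) (s : ℝ) :
    ContDiffAt ℝ 1 (fun x : (ℝ × ℝ) × ℝ => U₂ x.1 - U₁ x.1) (p, s) :=
  contDiffAt_rescale_width (hS.contDiffAt_zeros hp).1 (hS.contDiffAt_zeros hp).2 s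

theorem contDiffAt_comp_rescale (hS : WaveFamily V V' κ τ UM uMx umx σ m U₁ U₀ U₂ W)
    (hp : p ∈ D1 V V' UM uMx umx) {g : ℝ → ℝ} (hg : ContDiffAt ℝ 1 g (rescale U₁ U₂ p s)) :
    ContDiffAt ℝ 1 (fun x : (ℝ × ℝ) × ℝ => g (rescale U₁ U₂ x.1 x.2)) (p, s) :=
  TrafficTW.contDiffAt_comp_rescale (hS.contDiffAt_zeros hp).1 (hS.contDiffAt_zeros hp).2 hg

theorem contDiffAt_fTV (hS : WaveFamily V V' κ τ UM uMx umx σ m U₁ U₀ U₂ W)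
    (hp : p ∈ D1 V V' UM uMx umx) (hs : 0 ≤ s) :
    ContDiffAt ℝ 1 (fun x : (ℝ × ℝ) × ℝ => fTV V x.1.1 x.1.2 (rescale U₁ U₂ x.1 x.2)) (p, s) := by
  have hV := hS.contDiffAt_comp_rescale hp
    (hS.velocity.contDiffOn.contDiffAt (Ioi_mem_nhds (hS.rescale_pos hp hs)))
  have hU := hS.contDiffAt_comp_rescale (s := s) hp contDiffAt_id
  exact (((contDiffAt_fst.fst'.mul hU).sub hV).sub contDiffAt_snd.fst').div contDiffAt_fst.fst'
    (hS.slope_pos hp).ne'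

theorem contDiffAt_fdTV (hS : WaveFamily V V' κ τ UM uMx umx σ m U₁ U₀ U₂ W)
    (hp : p ∈ D1 V V' UM uMx umx) (hs : 0 ≤ s) :
    ContDiffAt ℝ 1 (fun x : (ℝ × ℝ) × ℝ => fdTV V' x.1.1 (rescale U₁ U₂ x.1 x.2)) (p, s) :=
  (contDiffAt_fst.fst'.sub (hS.contDiffAt_comp_rescale hp
    (hS.velocity.contDiffOn_deriv.contDiffAt (Ioi_mem_nhds (hS.rescale_pos hp hs))))).div
    contDiffAt_fst.fst' (hS.slope_pos hp).ne'

theorem contDiffAt_g1TV (hS : WaveFamily V V' κ τ UM uMx umx σ m U₁ U₀ U₂ W)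
    (hp : p ∈ D1 V V' UM uMx umx) (hs : 0 ≤ s) :
    ContDiffAt ℝ 1 (fun x : (ℝ × ℝ) × ℝ => g1TV κ τ (rescale U₁ U₂ x.1 x.2)) (p, s) :=
  hS.contDiffAt_comp_rescale hp
    (TrafficTW.contDiffAt_g1TV hS.kappa hS.tau_pos (hS.rescale_pos hp hs))

theorem contDiffAt_g2TV (hS : WaveFamily V V' κ τ UM uMx umx σ m U₁ U₀ U₂ W)
    (hp : p ∈ D1 V V' UM uMx umx) (hs : 0 ≤ s) :
    ContDiffAt ℝ 1 (fun x : (ℝ × ℝ) × ℝ => g2TV κ τ (rescale U₁ U₂ x.1 x.2)) (p, s) :=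
  hS.contDiffAt_comp_rescale hp
    (TrafficTW.contDiffAt_g2TV hS.kappa hS.tau_pos (hS.rescale_pos hp hs))

theorem hasDerivAt_fTV (hS : WaveFamily V V' κ τ UM uMx umx σ m U₁ U₀ U₂ W)
    (hp : p ∈ D1 V V' UM uMx umx) (hs : 0 ≤ s) :
    HasDerivAt (fun t => fTV V p.1 p.2 (rescale U₁ U₂ p t))
      ((U₂ p - U₁ p) * fdTV V' p.1 (rescale U₁ U₂ p s)) s := by
  have hf := ((hS.velocity.hasDerivAt_mul_sub p.1 (hS.rescale_pos hp hs)).sub_const p.2).div_const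
    p.1
  refine (hf.comp s (hasDerivAt_rescale U₁ U₂ p s)).congr_deriv ?_
  rw [fdTV]
  ring

theorem fTV_zero (hS : WaveFamily V V' κ τ UM uMx umx σ m U₁ U₀ U₂ W)
    (hp : p ∈ D1 V V' UM uMx umx) : fTV V p.1 p.2 (rescale U₁ U₂ p 0) = 0 := by
  rw [rescale_zero]
  exact (hS.zeros p hp).2.2.2.1

theorem fTV_one (hS : WaveFamily V V' κ τ UM uMx umx σ m U₁ U₀ U₂ W)
    (hp : p ∈ D1 V V' UM uMx umx) : fTV V p.1 p.2 (rescale U₁ U₂ p 1) = 0 := by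
  rw [rescale_one]
  exact (hS.zeros p hp).2.2.2.2.2.1

theorem deriv_F_pos (hS : WaveFamily V V' κ τ UM uMx umx σ m U₁ U₀ U₂ W)
    (hp : p ∈ D1 V V' UM uMx umx) (hs : 0 ≤ s) (h0 : fTV V p.1 p.2 (rescale U₁ U₂ p s) = 0)
    (hV : V' (rescale U₁ U₂ p s) < p.1) :
    0 < deriv (waveConnection V V' κ τ σ m U₁ U₂ W p).F s := by
  have hU := hS.rescale_pos hp hs
  have hg : DifferentiableAt ℝ (fun t => g1TV κ τ (rescale U₁ U₂ p t)) s :=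
    ((TrafficTW.contDiffAt_g1TV hS.kappa hS.tau_pos hU).differentiableAt one_ne_zero).comp s
      (hasDerivAt_rescale U₁ U₂ p s).differentiableAt
  have hF := (hasDerivAt_mul_of_eq_zero hg (hS.hasDerivAt_fTV hp hs) h0).const_mul (U₂ p - U₁ p)
  refine hF.deriv ▸ mul_pos (hS.width_pos hp) (mul_pos (g1TV_pos hS.kappa hS.tau_pos hU)
    (mul_pos (hS.width_pos hp) (div_pos (sub_pos.2 hV) (hS.slope_pos hp))))

theorem exists_eventually_abs_F_sub_le (hS : WaveFamily V V' κ τ UM uMx umx σ m U₁ U₀ U₂ W)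
    (hp : p ∈ D1 V V' UM uMx umx) :
    ∃ C, ∀ᶠ x : (ℝ × ℝ) × (ℝ × ℝ) in 𝓝 (p, p), ∀ s ∈ Icc (0 : ℝ) 1,
      |(waveConnection V V' κ τ σ m U₁ U₂ W x.1).F s -
        (waveConnection V V' κ τ σ m U₁ U₂ W x.2).F s| ≤ C * ‖x.1 - x.2‖ * (s * (1 - s)) := by
  simp only [waveConnection, ← mul_assoc (_ - _)]
  exact exists_eventually_abs_mul_sub_mul_le
    (φ := fun p s => fTV V p.1 p.2 (rescale U₁ U₂ p s))
    (G := fun p s => (U₂ p - U₁ p) * g1TV κ τ (rescale U₁ U₂ p s))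
    (fun s hs => (hS.contDiffAt_width hp s).mul (hS.contDiffAt_g1TV hp hs.1))
    (fun s hs => (hS.contDiffAt_width hp s).mul (hS.contDiffAt_fdTV hp hs.1))
    (eventually_of_mem (hS.velocity.isOpen_D1.mem_nhds hp) fun q hq =>
      ⟨hS.fTV_zero hq, hS.fTV_one hq, fun s hs => hS.hasDerivAt_fTV hq hs.1⟩)

theorem signChange_F (hS : WaveFamily V V' κ τ UM uMx umx σ m U₁ U₀ U₂ W)
    (hp : p ∈ D1 V V' UM uMx umx) :
    SignChange (waveConnection V V' κ τ σ m U₁ U₂ W p).F 0 1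
      ((U₀ p - U₁ p) / (U₂ p - U₁ p)) :=
  (((hS.zeros p hp).signChange_fTV hS.velocity hp.1 hp.2.1).comp_affine.pos_mul
    fun _ hs => g1TV_pos hS.kappa hS.tau_pos (hS.rescale_pos hp hs.1.le)).pos_mul
    fun _ _ => hS.width_pos hp

theorem profile_waveConnection (hS : WaveFamily V V' κ τ UM uMx umx σ m U₁ U₀ U₂ W)
    (hp : p ∈ D1 V V' UM uMx umx) :
    Profile (waveConnection V V' κ τ σ m U₁ U₂ W p).F (waveConnection V V' κ τ σ m U₁ U₂ W p).G
      (waveConnection V V' κ τ σ m U₁ U₂ W p).ω 0 1 := by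
  have hG : (waveConnection V V' κ τ σ m U₁ U₂ W p).G = fun s => (U₂ p - U₁ p) *
      (g2TV κ τ (rescale U₁ U₂ p s) * (σ * fdTV V' p.1 (rescale U₁ U₂ p s) + m p)) := by
    funext s
    simp only [ConnectionData.G, waveConnection]
    ring
  rw [hG]
  exact (hS.profile p hp).comp_affine (sub_pos.1 (hS.width_pos hp))

theorem regularFamily (hS : WaveFamily V V' κ τ UM uMx umx σ m U₁ U₀ U₂ W) :
    RegularFamily (waveConnection V V' κ τ σ m U₁ U₂ W) (D1 V V' UM uMx umx) where
  isOpen := hS.velocity.isOpen_D1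
  contDiffAt_F _ hp s hs :=
    (hS.contDiffAt_width hp s).mul ((hS.contDiffAt_g1TV hp hs.1).mul (hS.contDiffAt_fTV hp hs.1))
  contDiffAt_A _ hp s hs :=
    (hS.contDiffAt_width hp s).mul ((hS.contDiffAt_g2TV hp hs.1).mul
      (contDiffAt_const.mul (hS.contDiffAt_fdTV hp hs.1)))
  contDiffAt_B _ hp s hs := (hS.contDiffAt_width hp s).mul (hS.contDiffAt_g2TV hp hs.1)
  lipschitz_F _ hp := hS.exists_eventually_abs_F_sub_le hp
  B_pos _ hp _ hs :=
    mul_pos (hS.width_pos hp) (g2TV_pos hS.kappa hS.tau_pos (hS.rescale_pos hp hs.1))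
  F_zero _ hp := mul_eq_zero_of_right _ (mul_eq_zero_of_right _ (hS.fTV_zero hp))
  F_one _ hp := mul_eq_zero_of_right _ (mul_eq_zero_of_right _ (hS.fTV_one hp))
  deriv_F_zero_pos p hp := hS.deriv_F_pos hp le_rfl (hS.fTV_zero hp) <|
    (rescale_zero U₁ U₂ p).symm ▸ (hS.zeros p hp).deriv_lt_left hS.velocity hp.1 hp.2.1
  deriv_F_one_pos p hp := hS.deriv_F_pos hp zero_le_one (hS.fTV_one hp) <|
    (rescale_one U₁ U₂ p).symm ▸ (hS.zeros p hp).deriv_lt_right hS.velocity hp.1 hp.2.1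
  exists_signChange _ hp := ⟨_, hS.signChange_F hp⟩
  profile _ hp := hS.profile_waveConnection hp

theorem contDiffOn_m (hS : WaveFamily V V' κ τ UM uMx umx σ m U₁ U₀ U₂ W) :
    ContDiffOn ℝ 1 m (D1 V V' UM uMx umx) :=
  hS.regularFamily.contDiffOn_m

end WaveFamily

end WaveFamily

section Monotonicity

theorem ZerosD1.lt_of_lt {V V' : ℝ → ℝ} {UM K c c' u₁ u₀ u₂ v₁ v₀ v₂ : ℝ} {uMx umx : ℝ → ℝ}
    (hz : ZerosD1 V K c u₁ u₀ u₂) (hz' : ZerosD1 V K c' v₁ v₀ v₂)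
    (hV : OptimalVelocity V V' UM uMx umx) (hK : V' 0 < K) (hK' : K < V' UM) (hc : c < c') :
    u₁ < v₁ ∧ u₂ < v₂ := by
  obtain ⟨heq₁, -, heq₂⟩ := hz.mul_sub_eq (hV.slope_pos hK)
  obtain ⟨heq₁', -, heq₂'⟩ := hz'.mul_sub_eq (hV.slope_pos hK)
  obtain ⟨hu₁, -, hu₂⟩ := hz.location hV hK hK'
  obtain ⟨hv₁, -, hv₂⟩ := hz'.location hV hK hK'
  constructor
  · refine ((hV.strictMonoOn_Icc hK hK').lt_iff_lt ⟨hu₁.1.le, hu₁.2.le⟩ ⟨hv₁.1.le, hv₁.2.le⟩).1 ?_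
    rwa [heq₁, heq₁']
  · refine ((hV.strictMonoOn_Ici hK hK').lt_iff_lt (mem_Ici.2 hu₂.le) (mem_Ici.2 hv₂.le)).1 ?_
    rwa [heq₂, heq₂']

theorem Profile.exists_defect_nonneg {F₁ G₁ ω₁ F₂ G₂ ω₂ : ℝ → ℝ} {a₁ b₁ a₂ b₂ : ℝ}
    (h₁ : Profile F₁ G₁ ω₁ a₁ b₁) (h₂ : Profile F₂ G₂ ω₂ a₂ b₂) (ha : a₁ < a₂) (hab : a₂ < b₁)
    (hb : b₁ < b₂) : ∃ s ∈ Ioo a₂ b₁, 0 ≤ defect F₁ G₁ ω₁ F₂ G₂ s := by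
  obtain ⟨s, hs, heq, hderiv⟩ := exists_eq_zero_deriv_nonneg (g := fun s => ω₂ s - ω₁ s) hab.le
    ((h₂.continuousOn.mono (Icc_subset_Icc_right hb.le)).sub
      (h₁.continuousOn.mono (Icc_subset_Icc_left ha.le)))
    (by simpa only [h₂.left, zero_sub, neg_lt_zero] using h₁.pos a₂ ⟨ha, hab⟩)
    (by simpa only [h₁.right, sub_zero] using h₂.pos b₁ ⟨hab, hb⟩)
    fun s hs => (h₂.hasDerivAt s ⟨hs.1, hs.2.trans hb⟩).sub
      (h₁.hasDerivAt s ⟨ha.trans hs.1, hs.2⟩)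
  refine ⟨s, hs, ?_⟩
  rw [sub_eq_zero.1 heq] at hderiv
  rwa [defect, sub_div, ← add_sub_add_comm, add_comm, add_comm (G₂ s)] at *

theorem WaveProfile.exists_div_le {V V' κ : ℝ → ℝ} {τ K c c' σ m m' u₁ u₂ v₁ v₂ : ℝ}
    {W W' : ℝ → ℝ} (h : WaveProfile V V' κ τ K c σ m W u₁ u₂)
    (h' : WaveProfile V V' κ τ K c' σ m' W' v₁ v₂) (hκ : A2 κ) (hτ : 0 < τ) (hv₁ : 0 < v₁)
    (huv₁ : u₁ < v₁) (hvu : v₁ < u₂) (huv₂ : u₂ < v₂) :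
    ∃ x ∈ Ioo v₁ u₂, (c' - c) / (K * W x) ≤ x / 2 * (m' - m) := by
  obtain ⟨x, hx, hdefect⟩ := Profile.exists_defect_nonneg h h' huv₁ hvu huv₂
  have hpos := g1TV_pos hκ hτ (hv₁.trans hx.1)
  have heq : defect (fun u => g1TV κ τ u * fTV V K c u)
      (fun u => g2TV κ τ u * (σ * fdTV V' K u + m)) W (fun u => g1TV κ τ u * fTV V K c' u)
      (fun u => g2TV κ τ u * (σ * fdTV V' K u + m')) x =
      g1TV κ τ x * (x / 2 * (m' - m) - (c' - c) / (K * W x)) := by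
    simp only [defect, g2TV_eq_mul_g1TV, fTV]
    ring
  rw [heq] at hdefect
  exact ⟨x, hx, sub_nonneg.1 (nonneg_of_mul_nonneg_right hdefect hpos)⟩

namespace WaveFamily

variable {V V' κ : ℝ → ℝ} {τ UM : ℝ} {uMx umx : ℝ → ℝ} {σ : ℝ} {m U₁ U₀ U₂ : ℝ × ℝ → ℝ}
  {W : ℝ × ℝ → ℝ → ℝ} {K c : ℝ}

theorem exists_pos_mul_sub_le (hS : WaveFamily V V' κ τ UM uMx umx σ m U₁ U₀ U₂ W)
    (hp : (K, c) ∈ D1 V V' UM uMx umx) :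
    ∃ A > 0, ∀ c', c < c' → (K, c') ∈ D1 V V' UM uMx umx →
      A * (c' - c) ≤ m (K, c') - m (K, c) := by
  have hK := hS.slope_pos hp
  have hW : WaveProfile V V' κ τ K c σ (m (K, c)) (W (K, c)) (U₁ (K, c)) (U₂ (K, c)) :=
    hS.profile (K, c) hp
  have hz : ZerosD1 V K c (U₁ (K, c)) (U₀ (K, c)) (U₂ (K, c)) := hS.zeros (K, c) hp
  obtain ⟨M, hM⟩ := isCompact_Icc.bddAbove_image hW.continuousOn
  have hWM : ∀ x ∈ Ioo (U₁ (K, c)) (U₂ (K, c)), W (K, c) x ≤ M := fun x hx =>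
    hM (mem_image_of_mem _ (Ioo_subset_Icc_self hx))
  have hu₀ : U₀ (K, c) ∈ Ioo (U₁ (K, c)) (U₂ (K, c)) := ⟨hz.2.1, hz.2.2.1⟩
  have hMpos : 0 < M := (hW.pos _ hu₀).trans_le (hWM _ hu₀)
  have hu₂ : 0 < U₂ (K, c) := hz.1.trans (hu₀.1.trans hu₀.2)
  refine ⟨2 / (U₂ (K, c) * (K * M)), by positivity, fun c' hc hp' => ?_⟩
  have hW' : WaveProfile V V' κ τ K c' σ (m (K, c')) (W (K, c')) (U₁ (K, c')) (U₂ (K, c')) :=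
    hS.profile (K, c') hp'
  have hz' : ZerosD1 V K c' (U₁ (K, c')) (U₀ (K, c')) (U₂ (K, c')) := hS.zeros (K, c') hp'
  obtain ⟨hlt₁, hlt₂⟩ := hz.lt_of_lt hz' hS.velocity hp.1 hp.2.1 hc
  have hlt : U₁ (K, c') < U₂ (K, c) :=
    (hz'.lt_UM_lt hS.velocity hp.1 hp.2.1).1.trans (hz.lt_UM_lt hS.velocity hp.1 hp.2.1).2
  obtain ⟨x, hx, hle⟩ := WaveProfile.exists_div_le hW hW' hS.kappa hS.tau_pos hz'.1 hlt₁ hlt hlt₂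
  have hx' : x ∈ Ioo (U₁ (K, c)) (U₂ (K, c)) := ⟨hlt₁.trans hx.1, hx.2⟩
  have hxpos : 0 < x := hz'.1.trans hx.1
  have hWpos : 0 < W (K, c) x := hW.pos x hx'
  calc 2 / (U₂ (K, c) * (K * M)) * (c' - c)
      ≤ 2 / (x * (K * W (K, c) x)) * (c' - c) := by
        have := hWM x hx'
        have := hx.2.le
        gcongr
    _ = 2 / x * ((c' - c) / (K * W (K, c) x)) := by rw [div_mul_div_comm, div_mul_eq_mul_div]
    _ ≤ 2 / x * (x / 2 * (m (K, c') - m (K, c))) := by gcongr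
    _ = m (K, c') - m (K, c) := by field_simp

theorem strictMonoOn_m (hS : WaveFamily V V' κ τ UM uMx umx σ m U₁ U₀ U₂ W) (hK : V' 0 < K)
    (hK' : K < V' UM) :
    StrictMonoOn (fun c => m (K, c)) (Ioo (c1f V umx K) (cMf V uMx K)) := by
  intro c hc c' hc' hlt
  obtain ⟨A, hA, hslope⟩ := hS.exists_pos_mul_sub_le (K := K) (c := c) ⟨hK, hK', hc⟩
  exact sub_pos.1 ((mul_pos hA (sub_pos.2 hlt)).trans_le (hslope c' hlt ⟨hK, hK', hc'⟩))

theorem deriv_m_pos (hS : WaveFamily V V' κ τ UM uMx umx σ m U₁ U₀ U₂ W)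
    (hp : (K, c) ∈ D1 V V' UM uMx umx) : 0 < deriv (fun c => m (K, c)) c := by
  obtain ⟨A, hA, hslope⟩ := hS.exists_pos_mul_sub_le hp
  have hdiff : DifferentiableAt ℝ (fun c => m (K, c)) c :=
    ((hS.contDiffOn_m.differentiableOn one_ne_zero).differentiableAt
      (hS.velocity.isOpen_D1.mem_nhds hp)).comp c
      ((differentiableAt_const K).prodMk differentiableAt_id)
  refine hA.trans_le (ge_of_tendsto
    (hdiff.hasDerivAt.tendsto_slope.mono_left (nhdsGT_le_nhdsNE c)) ?_)
  filter_upwards [Ioo_mem_nhdsGT hp.2.2.2] with c' hc'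
  rw [slope_def_field, le_div_iff₀ (sub_pos.2 hc'.1)]
  exact hslope c' hc'.1 ⟨hp.1, hp.2.1, hp.2.2.1.trans hc'.1, hc'.2⟩

end WaveFamily

end Monotonicity

theorem stmt19
    (V V' V'' κ : ℝ → ℝ) (τ UM K₁ : ℝ) (uMx umx : ℝ → ℝ)
    (u1f u0f u2f μbf μff : ℝ → ℝ → ℝ)
    (hA1 : A1 V V' V'' UM) (hA2 : A2 κ) (hτ : 0 < τ)
    (huMx : UMaxHyp V' UM uMx) (humx : UMinHyp V' UM umx)
    (hK1 : K1Hyp V V' UM umx K₁)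
    (hz : ∀ K c, (K, c) ∈ D1 V V' UM uMx umx →
      ZerosD1 V K c (u1f K c) (u0f K c) (u2f K c))
    (hμb : ∀ K c, (K, c) ∈ D1 V V' UM uMx umx →
      ∀ μ, HasHE1 V V' κ τ K c μ (u1f K c) (u2f K c) ↔ μ = μbf K c)
    (hμf : ∀ K c, (K, c) ∈ D1 V V' UM uMx umx →
      ∀ μ, HasHE2 V V' κ τ K c μ (u1f K c) (u2f K c) ↔ μ = μff K c) :
    ContDiffOn ℝ 1 (fun p : ℝ × ℝ => μbf p.1 p.2) (D1 V V' UM uMx umx) ∧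
    ContDiffOn ℝ 1 (fun p : ℝ × ℝ => μff p.1 p.2) (D1 V V' UM uMx umx) ∧
    (∀ K c, (K, c) ∈ D1 V V' UM uMx umx →
      0 < deriv (fun c' => μbf K c') c ∧ deriv (fun c' => μff K c') c < 0) ∧
    (∀ K, V' 0 < K → K < V' UM →
      StrictMonoOn (fun c' => μbf K c') (Ioo (c1f V umx K) (cMf V uMx K)) ∧
      StrictAntiOn (fun c' => μff K c') (Ioo (c1f V umx K) (cMf V uMx K))) := by
  have hV := hA1.optimalVelocity huMx humx
  choose! Wb hWb using fun (p : ℝ × ℝ) (hp : p ∈ D1 V V' UM uMx umx) =>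
    ((hμb p.1 p.2 hp _).2 rfl).exists_waveProfile
  choose! Wf hWf using fun (p : ℝ × ℝ) (hp : p ∈ D1 V V' UM uMx umx) =>
    ((hμf p.1 p.2 hp _).2 rfl).exists_waveProfile
  have hb : WaveFamily V V' κ τ UM uMx umx 1 (fun p => μbf p.1 p.2) (fun p => u1f p.1 p.2)
      (fun p => u0f p.1 p.2) (fun p => u2f p.1 p.2) Wb :=
    ⟨hV, hA2, hτ, fun p => hz p.1 p.2, hWb⟩
  have hf : WaveFamily V V' κ τ UM uMx umx (-1) (fun p => -μff p.1 p.2) (fun p => u1f p.1 p.2)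
      (fun p => u0f p.1 p.2) (fun p => u2f p.1 p.2) Wf :=
    ⟨hV, hA2, hτ, fun p => hz p.1 p.2, hWf⟩
  refine ⟨hb.contDiffOn_m, by simpa using hf.contDiffOn_m.neg,
    fun K c hp => ⟨hb.deriv_m_pos hp, ?_⟩, fun K hK hK' => ⟨hb.strictMonoOn_m hK hK', ?_⟩⟩
  · simpa only [deriv.fun_neg, neg_pos] using hf.deriv_m_pos hp
  · exact fun c hc c' hc' hlt => neg_lt_neg_iff.1 (hf.strictMonoOn_m hK hK' hc hc' hlt)

end TrafficTW
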